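/- arXiv:1103.5519 — 2 statements merged into one kernel-verified Lean document; each statement's English description precedes it below -/
import Mathlib

section
/- Let L be an odd unimodular lattice in dimension 37 having minimum norm at least 3. Then L has minimum norm 3 and kissing number 1184 if and only if σ(L) = 21. -/
open scoped RealInnerProductSpace

noncomputable section

/-- The norm `(x, x)` of a vector `x ∈ ℝⁿ` (squared Euclidean length). -/
def normOf {n : ℕ} (x : EuclideanSpace ℝ (Fin n)) : ℝ := ⟪x, x⟫

/-- The dual `L* = {x ∈ ℝⁿ : (x,y) ∈ ℤ for all y ∈ L}` of a set of vectors. -/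
def dualSet {n : ℕ} (L : Set (EuclideanSpace ℝ (Fin n))) : Set (EuclideanSpace ℝ (Fin n)) :=
  {x | ∀ y ∈ L, ∃ m : ℤ, ⟪x, y⟫ = (m : ℝ)}

/-- `L` is a unimodular lattice: `L = L*`. -/
def IsUnimodularLattice {n : ℕ} (L : Set (EuclideanSpace ℝ (Fin n))) : Prop :=
  L = dualSet L

/-- `L` is odd: some vector of `L` has odd (integral) norm. -/
def IsOddLattice {n : ℕ} (L : Set (EuclideanSpace ℝ (Fin n))) : Prop :=
  ∃ x ∈ L, ∃ m : ℤ, Odd m ∧ normOf x = (m : ℝ)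

/-- The even sublattice `L₀ = {x ∈ L : (x,x) even}`. -/
def evenSublattice {n : ℕ} (L : Set (EuclideanSpace ℝ (Fin n))) :
    Set (EuclideanSpace ℝ (Fin n)) :=
  {x | x ∈ L ∧ ∃ m : ℤ, normOf x = 2 * (m : ℝ)}

/-- The shadow `S(L) = L₀* \ L`. -/
def shadow {n : ℕ} (L : Set (EuclideanSpace ℝ (Fin n))) : Set (EuclideanSpace ℝ (Fin n)) :=
  dualSet (evenSublattice L) \ L

/-- `L` has minimum norm `r`: `r` is the least norm among nonzero vectors of `L`. -/
def HasMinNorm {n : ℕ} (L : Set (EuclideanSpace ℝ (Fin n))) (r : ℝ) : Prop :=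
  IsLeast {s : ℝ | ∃ x ∈ L, x ≠ 0 ∧ normOf x = s} r

/-- The shadow `S(L)` has minimum norm `r`. -/
def HasShadowMinNorm {n : ℕ} (L : Set (EuclideanSpace ℝ (Fin n))) (r : ℝ) : Prop :=
  IsLeast {s : ℝ | ∃ x ∈ shadow L, normOf x = s} r

/-- `σ(L) = r`, i.e. `4 · min(S(L)) = r`. -/
def HasSigma {n : ℕ} (L : Set (EuclideanSpace ℝ (Fin n))) (r : ℝ) : Prop :=
  ∃ s : ℝ, HasShadowMinNorm L s ∧ r = 4 * s

/-- The number of vectors of norm `r` in `L`; when `L` has minimum norm `r`,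
this is the kissing number of `L`. -/
def numVecsOfNorm {n : ℕ} (L : Set (EuclideanSpace ℝ (Fin n))) (r : ℝ) : ℕ :=
  Set.ncard {x ∈ L | normOf x = r}

open MeasureTheory Complex in
theorem poisson_pi {n : ℕ} (f : C(Fin n → ℝ, ℂ)) (hf : Integrable f)
    (hloc : ∀ R : ℝ, ∃ u : (Fin n → ℤ) → ℝ, Summable u ∧
      ∀ k x, ‖x‖ ≤ R → ‖f (x + fun i => (k i : ℝ))‖ ≤ u k)
    (hsum : Summable fun m : Fin n → ℤ =>
      ∫ x : Fin n → ℝ, cexp (-2 * Real.pi * I * (∑ i, m i * x i)) * f x) (v : Fin n → ℝ) :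
    ∑' k : Fin n → ℤ, f (v + fun i => (k i : ℝ)) =
      ∑' m : Fin n → ℤ, (∫ x : Fin n → ℝ, cexp (-2 * Real.pi * I * (∑ i, m i * x i)) * f x) *
        cexp (2 * Real.pi * I * (∑ i, m i * v i)) := by
  set G : (Fin n → ℝ) → ℂ := fun x => ∑' k : Fin n → ℤ, f (x + fun i => (k i : ℝ)) with hG
  have hGc : Continuous G := by
    rw [continuous_iff_continuousAt]
    intro x0
    obtain ⟨u, hu, hb⟩ := hloc (‖x0‖ + 1)
    have : ContinuousOn G (Metric.closedBall 0 (‖x0‖ + 1)) := by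
      apply continuousOn_tsum (u := u)
      · intro k; fun_prop
      · exact hu
      · intro k x hx; exact hb k x (by simpa using hx)
    apply this.continuousAt
    apply Filter.mem_of_superset (Metric.closedBall_mem_nhds x0 one_pos)
    intro y hy
    simp only [Metric.mem_closedBall, dist_zero_right] at *
    have := norm_sub_norm_le y x0
    rw [dist_eq_norm] at hy
    linarith
  have hGper : ∀ x (k : Fin n → ℤ), G (x + fun i => (k i : ℝ)) = G x := by
    intro x k
    simp only [hG]
    rw [← (Equiv.addLeft k).tsum_eq (fun k : Fin n → ℤ => f (x + fun i => (k i : ℝ)))]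
    apply tsum_congr
    intro l
    congr 1
    ext i
    simp [add_assoc]
  -- lift to torus
  let π : (Fin n → ℝ) → UnitAddTorus (Fin n) := Pi.map (fun _ => ((↑) : ℝ → UnitAddCircle))
  have hπ : IsOpenQuotientMap π := by
    apply IsOpenQuotientMap.piMap
    intro i
    exact QuotientAddGroup.isOpenQuotientMap_mk
  have hfac : Function.FactorsThrough G π := by
    intro x y hxy
    have h1 : ∀ i, ∃ k : ℤ, y i + k = x i := by
      intro i
      have := congrFun hxy i
      simp only [π, Pi.map_apply] at this
      have h0 : ((x i - y i : ℝ) : UnitAddCircle) = 0 := by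
        rw [AddCircle.coe_sub, this, sub_self]
      obtain ⟨k, hk⟩ := (AddCircle.coe_eq_zero_iff (1:ℝ)).1 h0
      refine ⟨k, ?_⟩
      rw [zsmul_eq_mul, mul_one] at hk
      linarith
    choose k hk using h1
    rw [← hGper y k]
    congr 1
    ext i; simp [hk]
  let πc : C(Fin n → ℝ, UnitAddTorus (Fin n)) := ⟨π, hπ.continuous⟩
  have hπc : Topology.IsQuotientMap πc := hπ.isQuotientMap
  let F : C(UnitAddTorus (Fin n), ℂ) := hπc.lift ⟨G, hGc⟩ hfac
  have hF : ∀ x, F (π x) = G x := fun x => by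
    have := hπc.lift_comp ⟨G, hGc⟩ hfac
    exact congrArg (fun g : C(Fin n → ℝ, ℂ) => g x) this
  have hmF : ∀ (m : Fin n → ℤ) x, UnitAddTorus.mFourier m (π x) =
      cexp (2 * Real.pi * I * (∑ i, m i * x i)) := by
    intro m x
    simp only [UnitAddTorus.mFourier, ContinuousMap.coe_mk, π, Pi.map_apply, fourier_coe_apply]
    rw [← Complex.exp_sum]
    congr 1
    rw [ofReal_sum, Finset.mul_sum]
    apply Finset.sum_congr rfl
    intro i _
    push_cast; ring
  set s : (Fin n → ℤ) → Set (Fin n → ℝ) := fun k => {x | ∀ i, x i ∈ Set.Ioc (k i : ℝ) (k i + 1)} with hs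
  have hsm : ∀ k, MeasurableSet (s k) := fun k =>
    MeasurableSet.univ_pi' (fun i => measurableSet_Ioc)
  have hsd : Pairwise (Function.onFun Disjoint s) := by
    intro k l hkl
    rw [Function.onFun, Set.disjoint_left]
    intro x hx hy
    apply hkl
    ext i
    have h1 := hx i
    have h2 := hy i
    simp only [Set.mem_Ioc] at h1 h2
    have a1 : (k i : ℝ) < l i + 1 := by linarith
    have a2 : (l i : ℝ) < k i + 1 := by linarith
    norm_cast at a1 a2
    omega
  have hsu : ⋃ k, s k = Set.univ := by
    ext x
    simp only [Set.mem_iUnion, Set.mem_univ, iff_true]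
    refine ⟨fun i => ⌈x i⌉ - 1, fun i => ?_⟩
    have := Int.ceil_lt_add_one (x i)
    have := Int.le_ceil (x i)
    constructor <;> push_cast <;> linarith
  have htr : ∀ {E : Type} [NormedAddCommGroup E] [NormedSpace ℝ E] (g : (Fin n → ℝ) → E)
      (k : Fin n → ℤ), ∫ x in s k, g x = ∫ x in s 0, g (x + fun i => (k i : ℝ)) := by
    intro E _ _ g k
    have := (measurePreserving_add_right (volume : Measure (Fin n → ℝ)) (fun i => (k i : ℝ))).setIntegral_preimage_emb
      (measurableEmbedding_addRight _) g (s k)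
    rw [← this]
    congr 2
    ext x
    simp only [hs, Set.mem_preimage, Set.mem_ofPred_eq, Pi.add_apply, Set.mem_Ioc, Pi.zero_apply, Int.cast_zero]
    apply forall_congr'
    intro i
    constructor <;> rintro ⟨h1, h2⟩ <;> constructor <;> linarith
  have hcoef : ∀ m : Fin n → ℤ, UnitAddTorus.mFourierCoeff F m =
      ∫ x : Fin n → ℝ, cexp (-2 * Real.pi * I * (∑ i, m i * x i)) * f x := by
    intro m
    set g : (Fin n → ℝ) → ℂ := fun x => cexp (-2 * Real.pi * I * (∑ i, m i * x i)) * f x with hg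
    have hgn : ∀ x, ‖g x‖ = ‖f x‖ := by
      intro x
      simp only [hg, norm_mul]
      have : (-2 * Real.pi * I * (∑ i, m i * x i) : ℂ) = ((-2 * Real.pi * ∑ i, m i * x i : ℝ) : ℂ) * I := by
        push_cast; ring
      rw [this, Complex.norm_exp_ofReal_mul_I, one_mul]
    have hgc : Continuous g := by fun_prop
    have hgi : Integrable g := by
      apply hf.norm.mono' hgc.aestronglyMeasurable
      exact Filter.Eventually.of_forall (fun x => (hgn x).le)
    have hgk : ∀ x (k : Fin n → ℤ), g (x + fun i => (k i : ℝ)) =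
        cexp (-2 * Real.pi * I * (∑ i, m i * x i)) * f (x + fun i => (k i : ℝ)) := by
      intro x k
      simp only [hg]
      congr 1
      rw [Complex.exp_eq_exp_iff_exists_int]
      refine ⟨- ∑ i, m i * k i, ?_⟩
      simp only [Pi.add_apply]
      push_cast
      simp only [mul_add, Finset.sum_add_distrib]
      ring
    have h1 := hasSum_integral_iUnion hsm hsd (f := g) (by rw [hsu]; exact hgi.integrableOn)
    have h2 := hasSum_integral_iUnion hsm hsd (f := fun x => ‖g x‖) (by rw [hsu]; exact hgi.norm.integrableOn)
    rw [hsu, setIntegral_univ] at h1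
    rw [funext (htr g)] at h1
    rw [funext (htr fun x => ‖g x‖)] at h2
    rw [← h1.tsum_eq]
    rw [integral_tsum_of_summable_integral_norm (F := fun (k : Fin n → ℤ) x => g (x + fun i => (k i : ℝ)))]
    · rw [UnitAddTorus.mFourierCoeff_eq_integral F m 0]
      have : {x : Fin n → ℝ | ∀ i, x i ∈ Set.Ioc ((0 : Fin n → ℝ) i) ((0 : Fin n → ℝ) i + 1)} = s 0 := by
        ext x; simp [hs]
      rw [this]
      apply setIntegral_congr_fun (hsm 0)
      intro x hx
      change UnitAddTorus.mFourier (-m) (π x) • F (π x) = _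
      rw [hmF, hF]
      simp only [hgk, tsum_mul_left, smul_eq_mul, hG]
      congr 2
      simp
    · intro k
      exact (hgi.comp_add_right _).integrableOn
    · exact h2.summable
  have hfin := UnitAddTorus.hasSum_mFourier_series_apply_of_summable (f := F) (by
    simpa only [funext hcoef] using hsum) (π v)
  rw [hF] at hfin
  change G v = _
  rw [← hfin.tsum_eq]
  simp only [hcoef, hmF, smul_eq_mul]

theorem norm_add_sq_ge {V : Type*} [NormedAddCommGroup V] [InnerProductSpace ℝ V] (x v : V) :
    ‖x‖ ^ 2 / 2 - ‖v‖ ^ 2 ≤ ‖x + v‖ ^ 2 := by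
  have h := norm_sub_le (x + v) v
  rw [add_sub_cancel_right] at h
  have h1 : ‖x‖ ^ 2 ≤ (‖x + v‖ + ‖v‖) ^ 2 := by gcongr
  nlinarith [sq_nonneg (‖x + v‖ - ‖v‖)]

theorem summable_gauss {n : ℕ} (L : Submodule ℤ (EuclideanSpace ℝ (Fin n))) [DiscreteTopology L]
    [IsZLattice ℝ L] {a : ℝ} (ha : 0 < a) : Summable fun x : L => Real.exp (-a * ‖(x : EuclideanSpace ℝ (Fin n))‖ ^ 2) := by
  have h1 := ZLattice.summable_norm_pow_inv (L := L) (2 * (n + 1)) (by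
    rw [ZLattice.rank ℝ L]; simp; omega)
  have h2 := h1.mul_left ((n + 1).factorial / a ^ (n + 1) : ℝ)
  refine h2.of_norm_bounded_eventually ?_
  have : ∀ᶠ x : L in Filter.cofinite, x ≠ 0 := by
    simp
  filter_upwards [this] with x hx
  have hx' : 0 < ‖(x : EuclideanSpace ℝ (Fin n))‖ := by
    rw [norm_pos_iff]; simpa using hx
  rw [Real.norm_of_nonneg (Real.exp_pos _).le, neg_mul, Real.exp_neg]
  have h3 := Real.pow_div_factorial_le_exp (a * ‖(x : EuclideanSpace ℝ (Fin n))‖ ^ 2) (by positivity) (n + 1)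
  have h4 := inv_anti₀ (by positivity) h3
  refine h4.trans (le_of_eq ?_)
  rw [pow_mul, mul_pow]
  simp only [Submodule.coe_norm, inv_pow]
  field_simp

theorem summable_gauss_add {n : ℕ} (L : Submodule ℤ (EuclideanSpace ℝ (Fin n))) [DiscreteTopology L]
    [IsZLattice ℝ L] {a : ℝ} (ha : 0 < a) (v : EuclideanSpace ℝ (Fin n)) :
    Summable fun x : L => Real.exp (-a * ‖(x : EuclideanSpace ℝ (Fin n)) + v‖ ^ 2) := by
  have h1 := (summable_gauss L (a := a / 2) (by positivity)).mul_left (Real.exp (a * ‖v‖ ^ 2))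
  refine Summable.of_nonneg_of_le (fun x => (Real.exp_pos _).le) (fun x => ?_) h1
  rw [← Real.exp_add, Real.exp_le_exp]
  nlinarith [norm_add_sq_ge (x : EuclideanSpace ℝ (Fin n)) v]

theorem norm_gauss {x : ℝ} {τ : ℂ} : ‖Complex.exp (Real.pi * Complex.I * τ * x)‖ = Real.exp (-(Real.pi * τ.im) * x) := by
  rw [Complex.norm_exp]
  congr 1
  simp

theorem exists_haar_const {n : ℕ} (e : (Fin n → ℝ) ≃L[ℝ] EuclideanSpace ℝ (Fin n)) :
    ∃ c : ℝ, 0 < c ∧ (∀ g : EuclideanSpace ℝ (Fin n) → ℂ, ∫ u, g (e u) = c * ∫ x, g x) ∧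
      ∀ g : EuclideanSpace ℝ (Fin n) → ℂ, MeasureTheory.Integrable g →
        MeasureTheory.Integrable fun u => g (e u) := by
  let μ := MeasureTheory.Measure.map e MeasureTheory.volume
  have hμ : μ.IsAddHaarMeasure := e.isAddHaarMeasure_map _
  set c := μ.addHaarScalarFactor MeasureTheory.volume with hc
  have hc0 : 0 < c := MeasureTheory.Measure.addHaarScalarFactor_pos_of_isAddHaarMeasure _ _
  have hμc : μ = c • MeasureTheory.volume := MeasureTheory.Measure.isAddLeftInvariant_eq_smul _ _
  have hem : MeasurableEmbedding e := e.toHomeomorph.measurableEmbedding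
  refine ⟨c, by exact_mod_cast hc0, fun g => ?_, fun g hg => ?_⟩
  · rw [← hem.integral_map, show MeasureTheory.Measure.map e MeasureTheory.volume = μ from rfl, hμc,
      MeasureTheory.integral_smul_nnreal_measure]
    rw [NNReal.smul_def, Complex.real_smul]
  · have : MeasureTheory.Integrable g μ := by
      rw [hμc]; exact hg.smul_measure_nnreal
    exact hem.integrable_map_iff.1 this

open Complex in
theorem theta_poisson {n : ℕ} (L : Submodule ℤ (EuclideanSpace ℝ (Fin n))) [DiscreteTopology L]
    [IsZLattice ℝ L] (hd : ∀ x, x ∈ L ↔ ∀ y ∈ L, ∃ m : ℤ, ⟪x, y⟫ = (m : ℝ)) :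
    ∃ c : ℝ, 0 < c ∧ ∀ (τ : ℂ) (_ : 0 < τ.im) (v : EuclideanSpace ℝ (Fin n)),
      ∑' x : L, cexp (Real.pi * I * τ * (‖(x : EuclideanSpace ℝ (Fin n)) + v‖ ^ 2 : ℝ)) =
      c * (1 / (-I * τ)) ^ (n / 2 : ℂ) *
        ∑' x : L, cexp (Real.pi * I * (-1 / τ) * (‖(x : EuclideanSpace ℝ (Fin n))‖ ^ 2 : ℝ)) *
          cexp (2 * Real.pi * I * ⟪(x : EuclideanSpace ℝ (Fin n)), v⟫) := by
  obtain ⟨b⟩ : Nonempty (Module.Basis (Fin n) ℤ L) := by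
    have : Module.Free ℤ L := ZLattice.module_free ℝ L
    have : Module.Finite ℤ L := ZLattice.module_finite ℝ L
    exact ⟨Module.finBasisOfFinrankEq ℤ L (by rw [ZLattice.rank ℝ L]; simp)⟩
  let b' := b.ofZLatticeBasis ℝ L
  have hb' : ∀ i, b' i = (b i : EuclideanSpace ℝ (Fin n)) := fun i => by simp [b']
  let e : (Fin n → ℝ) ≃L[ℝ] EuclideanSpace ℝ (Fin n) := b'.equivFun.symm.toContinuousLinearEquiv
  have he : ∀ u, e u = ∑ i, u i • (b i : EuclideanSpace ℝ (Fin n)) := by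
    intro u
    have : e u = b'.equivFun.symm u := rfl
    rw [this, Module.Basis.equivFun_symm_apply]
    simp only [hb']
  have hek : ∀ k : Fin n → ℤ, e (fun i => (k i : ℝ)) = (b.equivFun.symm k : L) := by
    intro k
    rw [he, Module.Basis.equivFun_symm_apply]
    simp only [Submodule.coe_sum, Submodule.coe_smul, Int.cast_smul_eq_zsmul]
  obtain ⟨c, hc, hInt0, hInt1⟩ := exists_haar_const e
  -- the dual identification
  have hdual : ∀ x : L, ∃ m : Fin n → ℤ, ∀ i, ⟪(x : EuclideanSpace ℝ (Fin n)), (b i : EuclideanSpace ℝ (Fin n))⟫ = (m i : ℝ) := by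
    intro x
    have := fun i => (hd x).1 x.2 (b i) (b i).2
    choose m hm using this
    exact ⟨m, hm⟩
  choose φ hφ using hdual
  have hφe : ∀ (x : L) u, ∑ i, (φ x i : ℝ) * u i = ⟪(x : EuclideanSpace ℝ (Fin n)), e u⟫ := by
    intro x u
    rw [he, inner_sum]
    apply Finset.sum_congr rfl
    intro i _
    rw [inner_smul_right, hφ, mul_comm]
  have hbij : Function.Bijective φ := by
    constructor
    · intro x y hxy
      apply Subtype.ext
      apply ext_inner_right ℝ
      intro v
      rw [← e.apply_symm_apply v, ← hφe, ← hφe, hxy]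
    · intro m
      let w := (InnerProductSpace.toDual ℝ (EuclideanSpace ℝ (Fin n))).symm
        (LinearMap.toContinuousLinearMap (b'.constr ℝ (fun i => (m i : ℝ))))
      have hw : ∀ i, ⟪w, (b i : EuclideanSpace ℝ (Fin n))⟫ = m i := by
        intro i
        rw [InnerProductSpace.toDual_symm_apply, ← hb' i]
        simp only [LinearMap.coe_toContinuousLinearMap', Module.Basis.constr_basis]
      have hwL : w ∈ L := by
        rw [hd]
        intro y hy
        refine ⟨∑ i, b.equivFun ⟨y, hy⟩ i * m i, ?_⟩
        have h1 := hek (b.equivFun ⟨y, hy⟩)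
        rw [LinearEquiv.symm_apply_apply, he] at h1
        simp only at h1
        have h2 : ⟪w, y⟫ = ⟪w, ∑ i, (b.equivFun ⟨y, hy⟩ i : ℝ) • (b i : EuclideanSpace ℝ (Fin n))⟫ := by
          rw [h1]
        rw [h2, inner_sum]
        push_cast
        apply Finset.sum_congr rfl
        intro i _
        rw [inner_smul_right, hw]
      refine ⟨⟨w, hwL⟩, ?_⟩
      ext i
      have := hφ ⟨w, hwL⟩ i
      rw [hw] at this
      exact_mod_cast this.symm
  let Φ : L ≃ (Fin n → ℤ) := Equiv.ofBijective φ hbij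
  refine ⟨c, hc, fun τ hτ v => ?_⟩
  have hτ0 : τ ≠ 0 := by rintro rfl; simp at hτ
  have hbre : 0 < (-(Real.pi * I * τ)).re := by
    simp; exact mul_pos Real.pi_pos hτ
  have hτ' : 0 < (-1 / τ).im := by
    rw [neg_div, neg_im, one_div, inv_im]
    have := normSq_pos.2 hτ0
    rw [neg_div, neg_neg]; positivity
  let f : C(Fin n → ℝ, ℂ) := ⟨fun u => cexp (Real.pi * I * τ * (‖e u‖ ^ 2 : ℝ)), by fun_prop⟩
  have hf : ∀ u, f u = cexp (Real.pi * I * τ * (‖e u‖ ^ 2 : ℝ)) := fun u => rfl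
  have hfi : MeasureTheory.Integrable f := by
    apply hInt1 (fun x => cexp (Real.pi * I * τ * (‖x‖ ^ 2 : ℝ)))
    have := GaussianFourier.integrable_cexp_neg_mul_sq_norm_add (V := EuclideanSpace ℝ (Fin n)) hbre 0 0
    refine this.congr (Filter.Eventually.of_forall fun x => ?_)
    simp
  have hcoef : ∀ x : L, ∫ u : Fin n → ℝ, cexp (-2 * Real.pi * I * (∑ i, φ x i * u i : ℝ)) * f u =
      c * (1 / (-I * τ)) ^ (n / 2 : ℂ) *
        cexp (Real.pi * I * (-1 / τ) * (‖(x : EuclideanSpace ℝ (Fin n))‖ ^ 2 : ℝ)) := by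
    intro x
    simp only [hφe, hf]
    rw [hInt0 (fun y => cexp (-2 * Real.pi * I * (⟪(x : EuclideanSpace ℝ (Fin n)), y⟫ : ℝ)) * cexp (Real.pi * I * τ * (‖y‖ ^ 2 : ℝ)))]
    have h1 := fourier_gaussian_innerProductSpace hbre (x : EuclideanSpace ℝ (Fin n))
    rw [Real.fourier_eq'] at h1
    have h2 : ∀ y : EuclideanSpace ℝ (Fin n), cexp (-2 * Real.pi * I * (⟪(x : EuclideanSpace ℝ (Fin n)), y⟫ : ℝ)) * cexp (Real.pi * I * τ * (‖y‖ ^ 2 : ℝ)) = 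
       cexp (((-2 * Real.pi * ⟪y, (x : EuclideanSpace ℝ (Fin n))⟫ : ℝ) : ℂ) * I) • cexp (- -(Real.pi * I * τ) * (‖y‖ : ℂ) ^ 2) := by
      intro y
      rw [real_inner_comm, smul_eq_mul]
      congr 1
      · congr 1; push_cast; ring
      · congr 1; push_cast; ring
    simp only [h2]
    have hpi : (Real.pi : ℂ) ≠ 0 := by exact_mod_cast Real.pi_ne_zero
    have h3 : (Real.pi : ℂ) / -(Real.pi * I * τ) = 1 / (-I * τ) := by
      field_simp
    have h4 : -(Real.pi : ℂ) ^ 2 * (‖(x : EuclideanSpace ℝ (Fin n))‖ : ℂ) ^ 2 / -(Real.pi * I * τ) =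
        Real.pi * I * (-1 / τ) * (‖(x : EuclideanSpace ℝ (Fin n))‖ ^ 2 : ℝ) := by
      push_cast
      field_simp
      rw [I_sq]
      ring
    rw [h1, h3, h4, finrank_euclideanSpace_fin]; ring
  have hS : Summable fun x : L => cexp (Real.pi * I * (-1 / τ) * (‖(x : EuclideanSpace ℝ (Fin n))‖ ^ 2 : ℝ)) := by
    apply Summable.of_norm
    simp only [norm_gauss]
    exact summable_gauss L (by positivity)
  have key := poisson_pi f hfi ?_ ?_ (e.symm v)
  · rw [← (b.equivFun.toEquiv).tsum_eq, ← Φ.tsum_eq] at key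
    rw [← tsum_mul_left]
    convert key using 1
    · apply tsum_congr
      intro x
      rw [hf, map_add, e.apply_symm_apply]
      have := hek (b.equivFun x)
      rw [LinearEquiv.symm_apply_apply] at this
      rw [add_comm v]
      simp only [LinearEquiv.coe_toEquiv, this]
    · apply tsum_congr
      intro x
      simp only [Φ, Equiv.ofBijective_apply]
      rw [hcoef, hφe, e.apply_symm_apply]; ring
  · intro R
    obtain ⟨C, hC⟩ : ∃ C : ℝ, ∀ x : Fin n → ℝ, ‖e x‖ ≤ C * ‖x‖ := ⟨_, e.toContinuousLinearMap.le_opNorm⟩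
    have h1 := (summable_gauss L (a := (Real.pi * τ.im) / 2) (by positivity)).mul_left
      (Real.exp ((Real.pi * τ.im) * (|C| * R) ^ 2))
    refine ⟨_, (b.equivFun.symm.toEquiv.summable_iff).2 h1, ?_⟩
    intro k x hx
    rw [hf, norm_gauss]
    simp only [Function.comp_apply, LinearEquiv.coe_toEquiv]
    rw [← Real.exp_add, Real.exp_le_exp, map_add, hek, add_comm (e x)]
    have h2 := norm_add_sq_ge (((b.equivFun.symm k : L) : EuclideanSpace ℝ (Fin n))) (e x)
    have h3 : ‖e x‖ ≤ |C| * R := (hC x).trans (by gcongr; exact le_abs_self C)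
    have h4 : ‖e x‖ ^ 2 ≤ (|C| * R) ^ 2 := by gcongr
    have h5 : 0 < Real.pi * τ.im := by positivity
    nlinarith
  · rw [← Φ.summable_iff]
    refine (hS.mul_left (c * (1 / (-I * τ)) ^ (n / 2 : ℂ))).congr ?_
    intro x
    exact (hcoef x).symm

/-- Principal square root of `-iτ`. -/
def sfac (τ : ℂ) : ℂ := (-Complex.I * τ) ^ (1 / 2 : ℂ)

theorem sfac_sq (τ : ℂ) : sfac τ ^ 2 = -Complex.I * τ := by
  unfold sfac
  rw [one_div]
  exact Complex.cpow_ofNat_inv_pow _ 2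

theorem ne_zero_of_im {τ : ℂ} (hτ : 0 < τ.im) : τ ≠ 0 := by rintro rfl; simp at hτ

theorem sfac_ne_zero {τ : ℂ} (hτ : 0 < τ.im) : sfac τ ≠ 0 := by
  intro h
  have := sfac_sq τ
  rw [h] at this
  simp [ne_zero_of_im hτ] at this

theorem im_inv_pos {τ : ℂ} (hτ : 0 < τ.im) : 0 < (-1 / τ).im := by
  rw [neg_div, Complex.neg_im, one_div, Complex.inv_im]
  have := Complex.normSq_pos.2 (ne_zero_of_im hτ)
  rw [neg_div, neg_neg]; positivity

theorem sfac_inv {τ : ℂ} (hτ : 0 < τ.im) : sfac (-1 / τ) = (sfac τ)⁻¹ := by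
  unfold sfac
  rw [← Complex.inv_cpow]
  · congr 1
    have := ne_zero_of_im hτ
    field_simp
    rw [Complex.I_sq]
  · intro h
    have h1 := Complex.arg_eq_pi_iff.1 h
    simp at h1
    linarith [h1.1]

/-- The automorphy constant for `T` at the cusp `1`. -/
def zfac (τ : ℂ) : ℂ := sfac (-1 / τ - 1) * sfac τ / sfac (τ + 1)

theorem zfac_sq {τ : ℂ} (hτ : 0 < τ.im) : zfac τ ^ 2 = Complex.I := by
  unfold zfac
  rw [div_pow, mul_pow, sfac_sq, sfac_sq, sfac_sq]
  have h0 := ne_zero_of_im hτ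
  have h1 : τ + 1 ≠ 0 := ne_zero_of_im (by simpa using hτ)
  field_simp
  ring_nf
  
open Complex in
/-- Theta-like triples of weight `n/2`. -/
structure Tri (n : ℕ) (f3 f4 f2 : ℂ → ℂ) : Prop where
  d3 : DifferentiableOn ℂ f3 {z | 0 < z.im}
  d4 : DifferentiableOn ℂ f4 {z | 0 < z.im}
  d2 : DifferentiableOn ℂ f2 {z | 0 < z.im}
  t3 : ∀ τ : ℂ, 0 < τ.im → f3 (τ + 1) = f4 τ
  t4 : ∀ τ : ℂ, 0 < τ.im → f4 (τ + 1) = f3 τ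
  s3 : ∀ τ : ℂ, 0 < τ.im → f3 (-1 / τ) = sfac τ ^ n * f3 τ
  s4 : ∀ τ : ℂ, 0 < τ.im → f4 (-1 / τ) = sfac τ ^ n * f2 τ

namespace Tri
variable {n m : ℕ} {f3 f4 f2 g3 g4 g2 : ℂ → ℂ}

theorem s2 (h : Tri n f3 f4 f2) (τ : ℂ) (hτ : 0 < τ.im) : f2 (-1 / τ) = sfac τ ^ n * f4 τ := by
  have h1 := h.s4 (-1 / τ) (im_inv_pos hτ)
  have h0 := ne_zero_of_im hτ
  rw [show -1 / (-1 / τ) = τ by field_simp, sfac_inv hτ] at h1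
  have := sfac_ne_zero hτ
  rw [h1, ← mul_assoc, ← mul_pow, mul_inv_cancel₀ this, one_pow, one_mul]

theorem t2 (h : Tri n f3 f4 f2) (τ : ℂ) (hτ : 0 < τ.im) : f2 (τ + 1) = zfac τ ^ n * f2 τ := by
  have h0 := ne_zero_of_im hτ
  have hτ1 : 0 < (τ + 1).im := by simpa using hτ
  have h1 := ne_zero_of_im hτ1
  have hi := im_inv_pos hτ
  have hρ : 0 < (-1 / τ - 1).im := by simpa using hi
  have e1 := h.s4 (τ + 1) hτ1
  have e2 := h.t3 (-1 / (τ + 1)) (im_inv_pos hτ1)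
  have e3 := h.s3 (-1 / τ - 1) hρ
  have e4 := h.t4 (-1 / τ - 1) hρ
  have e5 := h.s4 τ hτ
  have hρ0 := ne_zero_of_im hρ
  have hx : -1 / (τ + 1) + 1 = -1 / (-1 / τ - 1) := by
    rw [eq_div_iff hρ0]
    field_simp
    ring
  rw [sub_add_cancel, e5] at e4
  rw [hx, e3, ← e4, e1] at e2
  have hs := sfac_ne_zero hτ1
  unfold zfac
  rw [div_pow, mul_pow, div_mul_eq_mul_div, eq_div_iff (pow_ne_zero n hs)]
  linear_combination -e2

theorem add (h : Tri n f3 f4 f2) (k : Tri n g3 g4 g2) :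
    Tri n (fun τ => f3 τ + g3 τ) (fun τ => f4 τ + g4 τ) (fun τ => f2 τ + g2 τ) where
  d3 := h.d3.add k.d3
  d4 := h.d4.add k.d4
  d2 := h.d2.add k.d2
  t3 τ hτ := by rw [h.t3 τ hτ, k.t3 τ hτ]
  t4 τ hτ := by rw [h.t4 τ hτ, k.t4 τ hτ]
  s3 τ hτ := by rw [h.s3 τ hτ, k.s3 τ hτ]; ring
  s4 τ hτ := by rw [h.s4 τ hτ, k.s4 τ hτ]; ring

theorem smul (c : ℂ) (h : Tri n f3 f4 f2) :
    Tri n (fun τ => c * f3 τ) (fun τ => c * f4 τ) (fun τ => c * f2 τ) where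
  d3 := h.d3.const_mul c
  d4 := h.d4.const_mul c
  d2 := h.d2.const_mul c
  t3 τ hτ := by rw [h.t3 τ hτ]
  t4 τ hτ := by rw [h.t4 τ hτ]
  s3 τ hτ := by rw [h.s3 τ hτ]; ring
  s4 τ hτ := by rw [h.s4 τ hτ]; ring

theorem mul (h : Tri n f3 f4 f2) (k : Tri m g3 g4 g2) :
    Tri (n + m) (fun τ => f3 τ * g3 τ) (fun τ => f4 τ * g4 τ) (fun τ => f2 τ * g2 τ) where
  d3 := h.d3.mul k.d3
  d4 := h.d4.mul k.d4
  d2 := h.d2.mul k.d2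
  t3 τ hτ := by rw [h.t3 τ hτ, k.t3 τ hτ]
  t4 τ hτ := by rw [h.t4 τ hτ, k.t4 τ hτ]
  s3 τ hτ := by rw [h.s3 τ hτ, k.s3 τ hτ]; ring
  s4 τ hτ := by rw [h.s4 τ hτ, k.s4 τ hτ]; ring

theorem pow (h : Tri n f3 f4 f2) (k : ℕ) :
    Tri (n * k) (fun τ => f3 τ ^ k) (fun τ => f4 τ ^ k) (fun τ => f2 τ ^ k) where
  d3 := h.d3.pow k
  d4 := h.d4.pow k
  d2 := h.d2.pow k
  t3 τ hτ := by rw [h.t3 τ hτ]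
  t4 τ hτ := by rw [h.t4 τ hτ]
  s3 τ hτ := by rw [h.s3 τ hτ, mul_pow, pow_mul]
  s4 τ hτ := by rw [h.s4 τ hτ, mul_pow, pow_mul]

/-- The weight 4 triple built from a weight 1/2 triple. -/
theorem delta (h : Tri 1 f3 f4 f2) :
    Tri 8 (fun τ => f2 τ ^ 4 * f4 τ ^ 4) (fun τ => -(f2 τ ^ 4 * f3 τ ^ 4))
      (fun τ => -(f3 τ ^ 4 * f4 τ ^ 4)) where
  d3 := (h.d2.pow 4).mul (h.d4.pow 4)
  d4 := ((h.d2.pow 4).mul (h.d3.pow 4)).neg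
  d2 := ((h.d3.pow 4).mul (h.d4.pow 4)).neg
  t3 τ hτ := by
    have : zfac τ ^ 4 = -1 := by
      rw [show 4 = 2 * 2 by norm_num, pow_mul, zfac_sq hτ, Complex.I_sq]
    rw [h.t2 τ hτ, h.t4 τ hτ, pow_one, mul_pow, this]; ring
  t4 τ hτ := by
    have : zfac τ ^ 4 = -1 := by
      rw [show 4 = 2 * 2 by norm_num, pow_mul, zfac_sq hτ, Complex.I_sq]
    rw [h.t2 τ hτ, h.t3 τ hτ, pow_one, mul_pow, this]; ring
  s3 τ hτ := by rw [h.s2 τ hτ, h.s4 τ hτ]; ring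
  s4 τ hτ := by rw [h.s2 τ hτ, h.s3 τ hτ]; ring

end Tri

/-- The filter of points with imaginary part going to infinity. -/
def iI : Filter ℂ := Filter.comap Complex.im Filter.atTop

theorem iI_pos : ∀ᶠ τ in iI, 0 < τ.im :=
  Filter.tendsto_comap.eventually (Filter.eventually_gt_atTop 0)

theorem tendsto_coe_iI : Filter.Tendsto (fun z : UpperHalfPlane => (z : ℂ)) UpperHalfPlane.atImInfty iI := by
  unfold iI UpperHalfPlane.atImInfty
  rw [Filter.tendsto_comap_iff]
  exact Filter.tendsto_comap

theorem tendsto_add_one_iI : Filter.Tendsto (fun z : ℂ => z + 1) iI iI := by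
  unfold iI
  rw [Filter.tendsto_comap_iff]
  have : Complex.im ∘ (fun z : ℂ => z + 1) = Complex.im := by ext; simp
  rw [this]
  exact Filter.tendsto_comap

open UpperHalfPlane ModularForm SlashInvariantForm MatrixGroups Asymptotics OnePoint in
open scoped Manifold Topology in
theorem levelOne_vanish (G : ℂ → ℂ) (hG : DifferentiableOn ℂ G {z | 0 < z.im})
    (k : ℕ) (hT : ∀ τ : ℂ, 0 < τ.im → G (τ + 1) = G τ)
    (hS : ∀ τ : ℂ, 0 < τ.im → G (-1 / τ) = τ ^ (12 * k) * G τ)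
    (hb : G =O[iI] fun τ => Real.exp (-(2 * k + 1) * Real.pi * τ.im)) :
    ∀ τ : ℂ, 0 < τ.im → G τ = 0 := by
  set F : ℍ → ℂ := fun z => G z / discriminant z ^ k with hF
  have sT : F ∣[(0:ℤ)] ModularGroup.T = F := by
    ext z
    have := congrFun discriminant_T_invariant z
    rw [SL_slash_apply] at this ⊢
    have hden : denom (ModularGroup.T : GL (Fin 2) ℝ) z = 1 := by
      simp [denom, ModularGroup.coe_T]
    rw [hden] at this ⊢
    simp only [hF]
    rw [show discriminant (ModularGroup.T • z) = discriminant z by simpa using this]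
    rw [modular_T_smul, coe_vadd, add_comm, show ((1:ℝ):ℂ) = 1 by simp, hT z z.im_pos]
    simp
  have sS : F ∣[(0:ℤ)] ModularGroup.S = F := by
    ext z
    have := congrFun discriminant_S_invariant z
    rw [SL_slash_apply] at this ⊢
    have hden : denom (ModularGroup.S : GL (Fin 2) ℝ) z = z := by
      simp [denom, ModularGroup.coe_S]
    rw [hden] at this ⊢
    simp only [hF]
    have hz : (z : ℂ) ≠ 0 := z.ne_zero
    have hd : discriminant (ModularGroup.S • z) = z ^ 12 * discriminant z := by
      rw [← this]; field_simp
    rw [hd, modular_S_smul]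
    have h2 : ((UpperHalfPlane.mk (-z : ℂ)⁻¹ z.im_inv_neg_coe_pos : ℍ) : ℂ) = -1 / z := by
      simp [neg_div]
    rw [h2, hS z z.im_pos, mul_pow, ← pow_mul]
    have := discriminant_ne_zero z
    simp only [neg_zero, zpow_zero, mul_one]
    field_simp
  have hsl := slash_action_generators_SL2Z sS sT
  have hO : F =O[atImInfty] fun z => Real.exp (-Real.pi * z.im) := by
    have h1 := hb.comp_tendsto tendsto_coe_iI
    have h2 := (exp_isBigO_discriminant.pow k).inv_rev (by
      filter_upwards with z hz
      exact absurd hz (pow_ne_zero _ (Real.exp_pos _).ne'))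
    refine (h1.mul h2).congr' ?_ ?_
    · filter_upwards with z
      simp [hF, div_eq_mul_inv]
    · filter_upwards with z
      simp only [Function.comp, coe_im]
      rw [← Real.exp_nat_mul, ← Real.exp_neg, ← Real.exp_add]
      congr 1; ring
  have hlim : Filter.Tendsto F atImInfty (nhds 0) := by
    refine hO.trans_tendsto ?_
    refine Real.tendsto_exp_atBot.comp ?_
    exact (Filter.tendsto_comap : Filter.Tendsto UpperHalfPlane.im atImInfty Filter.atTop).const_mul_atTop_of_neg (by linarith [Real.pi_pos])
  let FM : ModularForm 𝒮ℒ 0 :=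
    { toFun := F
      slash_action_eq' := fun _ ⟨γ, hγ⟩ ↦ hγ ▸ hsl γ
      holo' := by
        have hG' : MDiff (fun z : ℍ => G z) := by
          rw [UpperHalfPlane.mdifferentiable_iff]
          refine hG.congr fun z hz => ?_
          simp [ofComplex_apply_of_im_pos hz]
        exact hG'.div (CuspForm.discriminant.holo'.pow k) fun z => pow_ne_zero _ (discriminant_ne_zero z)
      bdd_at_cusps' {c} hc := by
        rw [Subgroup.IsArithmetic.isCusp_iff_isCusp_SL2Z] at hc
        rw [isBoundedAt_iff_forall_SL2Z hc]
        intro γ _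
        rw [hsl γ, IsBoundedAtImInfty, Filter.BoundedAtFilter]
        exact hlim.isBigO_one ℝ }
  obtain ⟨c, hc⟩ := ModularFormClass.levelOne_weight_zero_const FM
  have hFc : ∀ z, F z = c := fun z => congrFun hc z
  have hc0 : c = 0 := by
    refine tendsto_nhds_unique ?_ hlim
    rw [show F = fun _ => c from funext hFc]
    exact tendsto_const_nhds
  intro τ hτ
  have := hFc ⟨τ, hτ⟩
  rw [hc0] at this
  simp only [hF] at this
  rcases div_eq_zero_iff.1 this with h | h
  · exact h
  · exact absurd h (pow_ne_zero _ (discriminant_ne_zero _))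

theorem upper_open : IsOpen {z : ℂ | 0 < z.im} := isOpen_lt continuous_const Complex.continuous_im
theorem upper_preconn : IsPreconnected {z : ℂ | 0 < z.im} :=
  (convex_halfSpace_im_gt 0).isPreconnected

theorem zero_of_mul {f g : ℂ → ℂ} (hf : DifferentiableOn ℂ f {z | 0 < z.im})
    (hg : DifferentiableOn ℂ g {z | 0 < z.im}) (h : ∀ τ : ℂ, 0 < τ.im → f τ * g τ = 0) :
    (∀ τ : ℂ, 0 < τ.im → f τ = 0) ∨ (∀ τ : ℂ, 0 < τ.im → g τ = 0) := by
  exact AnalyticOnNhd.eq_zero_or_eq_zero_of_mul_eq_zero (hf.analyticOnNhd upper_open)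
    (hg.analyticOnNhd upper_open) h upper_preconn

open Asymptotics in
theorem Tri.vanish {f3 f4 f2 : ℂ → ℂ} (h : Tri 37 f3 f4 f2)
    (b3 : f3 =O[iI] fun τ => Real.exp (-4 * Real.pi * τ.im))
    (b2 : f2 =O[iI] fun τ => Real.exp (-(13 / 4) * Real.pi * τ.im)) :
    ∀ τ : ℂ, 0 < τ.im → f2 τ = 0 := by
  have b4 : f4 =O[iI] fun τ => Real.exp (-4 * Real.pi * τ.im) := by
    refine (b3.comp_tendsto tendsto_add_one_iI).congr' ?_ ?_
    · filter_upwards [iI_pos] with τ hτ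
      exact h.t3 τ hτ
    · filter_upwards with τ
      simp
  have key := levelOne_vanish (fun τ => (f3 τ * f4 τ * f2 τ) ^ 8) (((h.d3.mul h.d4).mul h.d2).pow 8) 37
    (fun τ hτ => by
      rw [h.t3 τ hτ, h.t4 τ hτ, h.t2 τ hτ]
      have : (zfac τ ^ 37) ^ 8 = 1 := by
        rw [← pow_mul, show 37 * 8 = 2 * 148 by norm_num, pow_mul, zfac_sq hτ,
          show 148 = 4 * 37 by norm_num, pow_mul, Complex.I_pow_four, one_pow]
      rw [mul_pow, mul_pow, mul_pow, mul_pow, mul_pow, this]; ring)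
    (fun τ hτ => by
      rw [h.s3 τ hτ, h.s4 τ hτ, h.s2 τ hτ]
      have : (sfac τ) ^ 888 = τ ^ (12 * 37) := by
        rw [show 888 = 2 * (4 * 111) by norm_num, pow_mul, sfac_sq, mul_pow, pow_mul (-Complex.I),
          neg_pow, Complex.I_pow_four]
        norm_num
      rw [← this]; ring)
    (by
      refine (((b3.mul b4).mul b2).pow 8).trans ?_
      refine IsBigO.of_bound 1 ?_
      filter_upwards [iI_pos] with τ hτ
      rw [← Real.exp_add, ← Real.exp_add, ← Real.exp_nat_mul, Real.norm_of_nonneg (Real.exp_pos _).le,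
        Real.norm_of_nonneg (Real.exp_pos _).le, one_mul, Real.exp_le_exp]
      have := mul_pos Real.pi_pos hτ
      push_cast
      nlinarith)
  have key2 : ∀ τ : ℂ, 0 < τ.im → f3 τ * f4 τ * f2 τ = 0 := fun τ hτ =>
    pow_eq_zero_iff (by norm_num) |>.1 (key τ hτ)
  have of4 : (∀ τ : ℂ, 0 < τ.im → f4 τ = 0) → ∀ τ : ℂ, 0 < τ.im → f2 τ = 0 := by
    intro h4 τ hτ
    have := h.s4 τ hτ
    rw [h4 _ (im_inv_pos hτ)] at this
    rcases mul_eq_zero.1 this.symm with h | h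
    · exact absurd h (pow_ne_zero _ (sfac_ne_zero hτ))
    · exact h
  rcases zero_of_mul (h.d3.mul h.d4) h.d2 key2 with h1 | h1
  · rcases zero_of_mul h.d3 h.d4 h1 with h2 | h2
    · exact of4 fun τ hτ => by rw [← h.t3 τ hτ]; exact h2 _ (by simpa using hτ)
    · exact of4 h2
  · exact h1

/-- The nome `e^{πiτ}`. -/
def nX (τ : ℂ) : ℂ := Complex.exp (Real.pi * Complex.I * τ)

theorem norm_nX (τ : ℂ) : ‖nX τ‖ = Real.exp (-Real.pi * τ.im) := by
  simp [nX, Complex.norm_exp]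

theorem nX_ne (τ : ℂ) : nX τ ≠ 0 := Complex.exp_ne_zero _

theorem nX_tendsto : Filter.Tendsto nX iI (nhds 0) := by
  rw [tendsto_zero_iff_norm_tendsto_zero]
  simp_rw [norm_nX]
  refine Real.tendsto_exp_atBot.comp ?_
  exact (Filter.tendsto_comap : Filter.Tendsto Complex.im iI Filter.atTop).const_mul_atTop_of_neg
    (by linarith [Real.pi_pos])

theorem nX_bdd : nX =O[iI] (fun _ => (1 : ℂ)) := nX_tendsto.isBigO_one ℂ

instance iI_neBot : iI.NeBot := by
  unfold iI
  refine Filter.comap_neBot_iff.2 fun t ht => ?_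
  obtain ⟨a, ha⟩ := (Filter.mem_atTop_sets.1 ht)
  exact ⟨⟨0, a⟩, ha a le_rfl⟩

/-- `f` has the expansion `a + b x + c x² + d x³ + O(x⁴)` where `x = e^{πiτ}`. -/
def Ex (f : ℂ → ℂ) (a b c d : ℂ) : Prop :=
  (fun τ => f τ - (a + b * nX τ + c * nX τ ^ 2 + d * nX τ ^ 3)) =O[iI] fun τ => nX τ ^ 4

namespace Ex
open Asymptotics
variable {f g : ℂ → ℂ} {a b c d a' b' c' d' : ℂ}

theorem poly_bdd (a b c d : ℂ) :
    (fun τ => a + b * nX τ + c * nX τ ^ 2 + d * nX τ ^ 3) =O[iI] (fun _ => (1 : ℂ)) := by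
  have h : Filter.Tendsto (fun τ => a + b * nX τ + c * nX τ ^ 2 + d * nX τ ^ 3) iI
      (nhds (a + b * 0 + c * 0 ^ 2 + d * 0 ^ 3)) :=
    ((tendsto_const_nhds.add (nX_tendsto.const_mul b)).add ((nX_tendsto.pow 2).const_mul c)).add
      ((nX_tendsto.pow 3).const_mul d)
  exact h.isBigO_one ℂ

theorem pow4_bdd : (fun τ => nX τ ^ 4) =O[iI] (fun _ => (1 : ℂ)) := by
  simpa using nX_bdd.pow 4

theorem bdd (h : Ex f a b c d) : f =O[iI] (fun _ => (1 : ℂ)) := by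
  have := (h.trans pow4_bdd).add (poly_bdd a b c d)
  refine this.congr_left fun τ => by ring

theorem congr (h : Ex f a b c d) (e : ∀ τ : ℂ, 0 < τ.im → f τ = g τ) : Ex g a b c d := by
  refine h.congr' ?_ (Filter.EventuallyEq.refl _ _)
  filter_upwards [iI_pos] with τ hτ
  rw [e τ hτ]

theorem cast (h : Ex f a b c d) (h1 : a = a') (h2 : b = b') (h3 : c = c') (h4 : d = d') :
    Ex f a' b' c' d' := by subst h1 h2 h3 h4; exact h

theorem add (h : Ex f a b c d) (k : Ex g a' b' c' d') :
    Ex (fun τ => f τ + g τ) (a + a') (b + b') (c + c') (d + d') := by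
  refine (IsBigO.add h k).congr_left fun τ => by ring

theorem smul (z : ℂ) (h : Ex f a b c d) : Ex (fun τ => z * f τ) (z * a) (z * b) (z * c) (z * d) := by
  refine (h.const_mul_left z).congr_left fun τ => by ring

theorem mul (h : Ex f a b c d) (k : Ex g a' b' c' d') :
    Ex (fun τ => f τ * g τ) (a * a') (a * b' + b * a') (a * c' + b * b' + c * a')
      (a * d' + b * c' + c * b' + d * a') := by
  have h1 := IsBigO.mul h k.bdd
  have h2 := IsBigO.mul (poly_bdd a b c d) k
  have h3 := IsBigO.mul (isBigO_refl (fun τ => nX τ ^ 4) iI)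
    (poly_bdd (b * d' + c * c' + d * b') (c * d' + d * c') (d * d') 0)
  simp only [mul_one, one_mul] at h1 h2 h3
  refine ((h1.add h2).add h3).congr_left fun τ => by ring

theorem sq (h : Ex f a b c d) : Ex (fun τ => f τ ^ 2) (a * a) (a * b + b * a) (a * c + b * b + c * a)
      (a * d + b * c + c * b + d * a) := by
  refine (h.mul h).congr fun τ _ => by ring

theorem one : Ex (fun _ => 1) 1 0 0 0 := by
  unfold Ex
  simp only [zero_mul, add_zero, sub_self]
  exact isBigO_zero _ _

theorem nome : Ex nX 0 1 0 0 := by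
  unfold Ex
  simp only [zero_mul, add_zero, sub_self, zero_add, one_mul]
  exact isBigO_zero _ _

theorem shift (h : Ex f a b c d) : Ex (fun τ => f (τ + 1)) a (-b) c (-d) := by
  have hX : ∀ τ, nX (τ + 1) = -nX τ := by
    intro τ
    simp [nX, mul_add, Complex.exp_add]
  have := h.comp_tendsto tendsto_add_one_iI
  refine this.congr (fun τ => ?_) (fun τ => ?_)
  · simp only [Function.comp, hX]; ring
  · simp only [Function.comp, hX]; ring

theorem tendsto (h : Ex f a b c d) : Filter.Tendsto f iI (nhds a) := by
  have h1 : Filter.Tendsto (fun τ => a + b * nX τ + c * nX τ ^ 2 + d * nX τ ^ 3) iI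
      (nhds (a + b * 0 + c * 0 ^ 2 + d * 0 ^ 3)) :=
    ((tendsto_const_nhds.add (nX_tendsto.const_mul b)).add ((nX_tendsto.pow 2).const_mul c)).add
      ((nX_tendsto.pow 3).const_mul d)
  have h2 := h.trans_tendsto (by simpa using nX_tendsto.pow 4)
  have := h2.add h1
  simpa using this

theorem coeff2 (h : Ex f a b c d) (k : Ex f a' b' c' d') : c = c' := by
  have h0 : (fun τ => (a - a') + (b - b') * nX τ + (c - c') * nX τ ^ 2 + (d - d') * nX τ ^ 3)
      =O[iI] fun τ => nX τ ^ 4 := by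
    refine (IsBigO.sub k h).congr_left fun τ => by ring
  have ea : a - a' = 0 := by
    have := h.tendsto
    rw [tendsto_nhds_unique this k.tendsto, sub_self]
  have hi : ∀ m : ℕ, (fun τ => (nX τ ^ m)⁻¹) =O[iI] fun τ => (nX τ ^ m)⁻¹ := fun m => isBigO_refl _ _
  have eb : b - b' = 0 := by
    have h1 := h0.mul (hi 1)
    have h2 : (fun τ => (b - b') + (c - c') * nX τ + (d - d') * nX τ ^ 2) =O[iI] fun τ => nX τ ^ 3 := by
      refine h1.congr (fun τ => ?_) (fun τ => ?_)
      · have := nX_ne τ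
        rw [ea]; field_simp; ring
      · have := nX_ne τ
        field_simp
    have l1 := h2.trans_tendsto (by simpa using nX_tendsto.pow 3)
    have l2 : Filter.Tendsto (fun τ => (b - b') + (c - c') * nX τ + (d - d') * nX τ ^ 2) iI
      (nhds ((b - b') + (c - c') * 0 + (d - d') * 0 ^ 2)) :=
      ((tendsto_const_nhds.add (nX_tendsto.const_mul _)).add ((nX_tendsto.pow 2).const_mul _))
    simpa using tendsto_nhds_unique l2 l1
  have h1 := h0.mul (hi 2)
  have h2 : (fun τ => (c - c') + (d - d') * nX τ) =O[iI] fun τ => nX τ ^ 2 := by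
    refine h1.congr (fun τ => ?_) (fun τ => ?_)
    · have := nX_ne τ
      rw [ea, eb]; field_simp; ring
    · have := nX_ne τ
      field_simp
  have l1 := h2.trans_tendsto (by simpa using nX_tendsto.pow 2)
  have l2 : Filter.Tendsto (fun τ => (c - c') + (d - d') * nX τ) iI
    (nhds ((c - c') + (d - d') * 0)) :=
    (tendsto_const_nhds.add (nX_tendsto.const_mul _))
  have := tendsto_nhds_unique l2 l1
  simp only [mul_zero, add_zero] at this
  exact sub_eq_zero.1 this

theorem of_bigO (h : f =O[iI] fun τ => nX τ ^ 4) : Ex f 0 0 0 0 := by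
  refine h.congr_left fun τ => by ring

end Ex

/-- Tail estimate for theta-type series. -/
theorem theta_tail {ι : Type*} (N : ι → ℝ) (hN : ∀ i, 0 ≤ N i)
    (hs : Summable fun i => Real.exp (-Real.pi * N i)) (s : Finset ι) (M : ℝ)
    (hM : ∀ i, i ∉ s → M ≤ N i) :
    (fun τ : ℂ => ∑' i, Complex.exp (Real.pi * Complex.I * τ * (N i : ℝ)) -
      ∑ i ∈ s, Complex.exp (Real.pi * Complex.I * τ * (N i : ℝ))) =O[iI]
      fun τ => Real.exp (-Real.pi * M * τ.im) := by
  classical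
  refine Asymptotics.IsBigO.of_bound (Real.exp (Real.pi * M) * ∑' i, Real.exp (-Real.pi * N i)) ?_
  have h1 : ∀ᶠ τ in iI, 1 ≤ τ.im := Filter.tendsto_comap.eventually (Filter.eventually_ge_atTop 1)
  filter_upwards [h1] with τ hτ
  have hn : ∀ i, ‖Complex.exp (Real.pi * Complex.I * τ * (N i : ℝ))‖ = Real.exp (-Real.pi * N i * τ.im) := by
    intro i
    rw [Complex.norm_exp]
    congr 1
    simp
    ring
  have hle : ∀ i, Real.exp (-Real.pi * N i * τ.im) ≤ Real.exp (-Real.pi * N i) := by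
    intro i
    rw [Real.exp_le_exp]
    have := mul_nonneg Real.pi_pos.le (hN i)
    nlinarith
  have hsum : Summable fun i => Complex.exp (Real.pi * Complex.I * τ * (N i : ℝ)) := by
    refine Summable.of_norm_bounded hs fun i => ?_
    rw [hn]; exact hle i
  rw [← hsum.sum_add_tsum_subtype_compl s, add_sub_cancel_left]
  have hb : ∀ i : {i // i ∉ s}, ‖Complex.exp (Real.pi * Complex.I * τ * (N i : ℝ))‖ ≤
      Real.exp (Real.pi * M) * Real.exp (-Real.pi * M * τ.im) * Real.exp (-Real.pi * N i) := by
    intro i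
    rw [hn, ← Real.exp_add, ← Real.exp_add, Real.exp_le_exp]
    have := hM i i.2
    have h2 := mul_nonneg (mul_nonneg Real.pi_pos.le (sub_nonneg.2 this)) (sub_nonneg.2 hτ)
    nlinarith
  have hs' : Summable fun i : {i // i ∉ s} => Real.exp (-Real.pi * N i) := hs.subtype _
  refine (tsum_of_norm_bounded (hs'.mul_left _).hasSum hb).trans ?_
  rw [tsum_mul_left, Real.norm_of_nonneg (Real.exp_pos _).le]
  have h3 : ∑' i : {i // i ∉ s}, Real.exp (-Real.pi * N i) ≤ ∑' i, Real.exp (-Real.pi * N i) :=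
    Summable.tsum_subtype_le _ {i | i ∉ s} (fun i => (Real.exp_pos _).le) hs
  have h4 := mul_le_mul_of_nonneg_left h3
    (mul_pos (Real.exp_pos (Real.pi * M)) (Real.exp_pos (-Real.pi * M * τ.im))).le
  linarith

/-- Jacobi theta constants. -/
def th3 (τ : ℂ) : ℂ := jacobiTheta₂ 0 τ
def th4 (τ : ℂ) : ℂ := jacobiTheta₂ (1 / 2) τ
def th2 (τ : ℂ) : ℂ := Complex.exp (Real.pi * Complex.I * τ / 4) * jacobiTheta₂ (τ / 2) τ

theorem th3_eq (τ : ℂ) : th3 τ = ∑' n : ℤ, Complex.exp (Real.pi * Complex.I * τ * (((n : ℝ) ^ 2 : ℝ))) := by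
  unfold th3 jacobiTheta₂
  refine tsum_congr fun n => ?_
  unfold jacobiTheta₂_term
  congr 1
  push_cast
  ring

theorem th2_eq (τ : ℂ) : th2 τ = ∑' n : ℤ, Complex.exp (Real.pi * Complex.I * τ * (((n + 1 / 2 : ℝ) ^ 2 : ℝ))) := by
  unfold th2 jacobiTheta₂
  rw [← tsum_mul_left]
  refine tsum_congr fun n => ?_
  unfold jacobiTheta₂_term
  rw [← Complex.exp_add]
  congr 1
  push_cast
  ring

theorem exp_pi_sq (n : ℤ) : Complex.exp (Real.pi * Complex.I * n ^ 2) = Complex.exp (Real.pi * Complex.I * n) := by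
  obtain ⟨m, hm⟩ := Int.even_mul_succ_self (n - 1)
  have : (n : ℂ) ^ 2 = n + 2 * m := by
    have : n ^ 2 = n + 2 * m := by linarith
    exact_mod_cast this
  rw [this, mul_add, Complex.exp_add]
  rw [show (Real.pi : ℂ) * Complex.I * (2 * m) = m * (2 * Real.pi * Complex.I) by ring,
    Complex.exp_int_mul_two_pi_mul_I, mul_one]

theorem triJacobi : Tri 1 th3 th4 th2 where
  d3 τ hτ := (differentiableAt_jacobiTheta₂_snd 0 hτ).differentiableWithinAt
  d4 τ hτ := (differentiableAt_jacobiTheta₂_snd (1 / 2) hτ).differentiableWithinAt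
  d2 τ hτ := by
    refine DifferentiableAt.differentiableWithinAt ?_
    unfold th2
    refine DifferentiableAt.mul (by fun_prop) ?_
    have h := (hasFDerivAt_jacobiTheta₂ (τ / 2) hτ).differentiableAt
    have h2 : DifferentiableAt ℂ (fun t : ℂ => (t / 2, t)) τ := by fun_prop
    exact DifferentiableAt.comp (f := fun t : ℂ => (t / 2, t))
      (g := fun p : ℂ × ℂ ↦ jacobiTheta₂ p.1 p.2) τ h h2
  t3 τ hτ := by
    unfold th3 th4 jacobiTheta₂
    refine tsum_congr fun n => ?_
    unfold jacobiTheta₂_term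
    rw [mul_add, mul_one, Complex.exp_add, Complex.exp_add, Complex.exp_add, exp_pi_sq]
    rw [show 2 * (Real.pi : ℂ) * Complex.I * n * (1 / 2) = Real.pi * Complex.I * n by ring]
    simp
    ring
  t4 τ hτ := by
    unfold th3 th4 jacobiTheta₂
    refine tsum_congr fun n => ?_
    unfold jacobiTheta₂_term
    rw [mul_add, mul_one, Complex.exp_add, Complex.exp_add, Complex.exp_add, exp_pi_sq]
    rw [show 2 * (Real.pi : ℂ) * Complex.I * n * (1 / 2) = Real.pi * Complex.I * n by ring]
    have : Complex.exp (Real.pi * Complex.I * n) * Complex.exp (Real.pi * Complex.I * n) = 1 := by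
      rw [← Complex.exp_add, show (Real.pi : ℂ) * Complex.I * n + Real.pi * Complex.I * n
        = n * (2 * Real.pi * Complex.I) by ring, Complex.exp_int_mul_two_pi_mul_I]
    simp only [mul_zero, Complex.exp_zero, one_mul]
    linear_combination Complex.exp (Real.pi * Complex.I * n ^ 2 * τ) * this
  s3 τ hτ := by
    have := jacobiTheta₂_functional_equation 0 τ
    have h2 := sfac_ne_zero hτ
    unfold th3
    rw [this]
    change _ = sfac τ ^ 1 * (1 / sfac τ * _ * _)
    simp
    field_simp
  s4 τ hτ := by
    have := jacobiTheta₂_functional_equation (τ / 2) τ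
    have h2 := sfac_ne_zero hτ
    have h0 := ne_zero_of_im hτ
    unfold th4 th2
    rw [this]
    change _ = sfac τ ^ 1 * (_ * (1 / sfac τ * _ * _))
    rw [show τ / 2 / τ = 1 / 2 by field_simp]
    rw [show -(Real.pi : ℂ) * Complex.I * (τ / 2) ^ 2 / τ = -(Real.pi * Complex.I * τ / 4) by
      rw [div_eq_iff h0]; ring, Complex.exp_neg]
    have h3 := Complex.exp_ne_zero (Real.pi * Complex.I * τ / 4)
    generalize Complex.exp (Real.pi * Complex.I * τ / 4) = E at *
    generalize jacobiTheta₂ (1 / 2) (-1 / τ) = J at *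
    generalize sfac τ = S at *
    field_simp

theorem th2_add_one (τ : ℂ) : th2 (τ + 1) = Complex.exp (Real.pi * Complex.I / 4) * th2 τ := by
  rw [th2_eq, th2_eq, ← tsum_mul_left]
  refine tsum_congr fun n => ?_
  rw [← Complex.exp_add]
  obtain ⟨m, hm⟩ := Int.even_mul_succ_self n
  have hm' : (n : ℂ) * (n + 1) = m + m := by exact_mod_cast hm
  rw [Complex.exp_eq_exp_iff_exists_int]
  refine ⟨m, ?_⟩
  push_cast
  linear_combination Real.pi * Complex.I * hm'

theorem sum_exp_int : Summable fun n : ℤ => Real.exp (-Real.pi * ((n : ℝ) ^ 2)) := by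
  have := (summable_jacobiTheta₂_term_iff 0 Complex.I).2 (by simp)
  have := this.norm
  refine this.congr fun n => ?_
  rw [norm_jacobiTheta₂_term]
  simp

theorem sum_exp_half : Summable fun n : ℤ => Real.exp (-Real.pi * ((n + 1 / 2 : ℝ) ^ 2)) := by
  have := (summable_jacobiTheta₂_term_iff (Complex.I / 2) Complex.I).2 (by simp)
  have := this.norm.mul_left (Real.exp (-Real.pi / 4))
  refine this.congr fun n => ?_
  rw [norm_jacobiTheta₂_term, ← Real.exp_add]
  congr 1
  simp
  ring

/-- `e^{πiτ/4}` -/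
def nw (τ : ℂ) : ℂ := Complex.exp (Real.pi * Complex.I * τ / 4)
theorem nw_ne (τ : ℂ) : nw τ ≠ 0 := Complex.exp_ne_zero _
theorem nw_pow4 (τ : ℂ) : nw τ ^ 4 = nX τ := by
  unfold nw nX
  rw [← Complex.exp_nat_mul]; congr 1; push_cast; ring
theorem norm_nw (τ : ℂ) : ‖nw τ‖ = Real.exp (-(1 / 4) * Real.pi * τ.im) := by
  unfold nw
  rw [Complex.norm_exp]; congr 1
  simp
  ring

theorem ex_th3 : Ex th3 1 2 0 0 := by
  have h := theta_tail (fun n : ℤ => (n : ℝ) ^ 2) (fun n => by positivity) sum_exp_int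
    {-1, 0, 1} 4 (by
      intro n hn
      have : 2 ≤ |n| := by
        simp at hn
        rw [le_abs]
        omega
      have h2 : (2 : ℝ) ≤ |(n : ℝ)| := by exact_mod_cast this
      rw [← sq_abs]
      nlinarith)
  have h' : (fun τ => th3 τ - (1 + 2 * nX τ + 0 * nX τ ^ 2 + 0 * nX τ ^ 3)) =O[iI]
      fun τ => Real.exp (-Real.pi * 4 * τ.im) := by
    refine h.congr_left fun τ => ?_
    rw [th3_eq]
    rw [Finset.sum_insert (by decide), Finset.sum_insert (by decide), Finset.sum_singleton]
    simp [nX]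
    ring
  refine (h'.trans (Asymptotics.IsBigO.of_bound 1 ?_))
  filter_upwards with τ
  rw [norm_pow, norm_nX, ← Real.exp_nat_mul, Real.norm_of_nonneg (Real.exp_pos _).le, one_mul]
  apply le_of_eq; congr 1; push_cast; ring

theorem ex_th4 : Ex th4 1 (-2) 0 0 := by
  refine (ex_th3.shift.congr fun τ hτ => triJacobi.t3 τ hτ).cast rfl rfl rfl (by simp)

/-- normalised theta_2 -/
def tP (τ : ℂ) : ℂ := th2 τ / (2 * nw τ)
theorem th2_tP (τ : ℂ) : th2 τ = 2 * nw τ * tP τ := by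
  have := nw_ne τ
  unfold tP; field_simp

theorem ex_tP : Ex tP 1 0 1 0 := by
  have h := theta_tail (fun n : ℤ => (n + 1 / 2 : ℝ) ^ 2) (fun n => by positivity) sum_exp_half
    {-2, -1, 0, 1} (17 / 4) (by
      intro n hn
      have : 2 ≤ n ∨ n ≤ -3 := by
        simp at hn
        omega
      rcases this with h | h
      · have h2 : (2 : ℝ) ≤ n := by exact_mod_cast h
        nlinarith
      · have h2 : (n : ℝ) ≤ -3 := by exact_mod_cast h
        nlinarith)
  have h' : (fun τ => th2 τ - (2 * nw τ + 2 * nw τ * nX τ ^ 2)) =O[iI]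
      fun τ => Real.exp (-Real.pi * (17 / 4) * τ.im) := by
    refine h.congr_left fun τ => ?_
    rw [th2_eq]
    rw [Finset.sum_insert (by decide), Finset.sum_insert (by decide), Finset.sum_insert (by decide),
      Finset.sum_singleton]
    have e1 : nw τ = Complex.exp (Real.pi * Complex.I * τ * ((1 / 4 : ℝ))) := by
      unfold nw; congr 1; push_cast; ring
    have e9 : nw τ * nX τ ^ 2 = Complex.exp (Real.pi * Complex.I * τ * ((9 / 4 : ℝ))) := by
      unfold nw nX; rw [← Complex.exp_nat_mul, ← Complex.exp_add]; congr 1; push_cast; ring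
    rw [mul_assoc 2 (nw τ), e9, e1]
    norm_num
    ring
  have hw : (fun τ => (2 * nw τ)⁻¹) =O[iI] fun τ => Real.exp ((1 / 4) * Real.pi * τ.im) := by
    refine Asymptotics.IsBigO.of_bound 1 ?_
    filter_upwards with τ
    rw [norm_inv, norm_mul, norm_nw, Real.norm_of_nonneg (Real.exp_pos _).le, mul_inv, ← Real.exp_neg]
    norm_num
    have := Real.exp_pos (1 / 4 * Real.pi * τ.im)
    linarith
  refine ((h'.mul hw).congr_left (f₂ := fun τ => tP τ - (1 + 0 * nX τ + 1 * nX τ ^ 2 + 0 * nX τ ^ 3)) ?_).trans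
    (Asymptotics.IsBigO.of_bound 1 ?_)
  · intro τ
    have := nw_ne τ
    unfold tP
    field_simp
    ring
  filter_upwards with τ
  rw [norm_pow, norm_nX, ← Real.exp_nat_mul, ← Real.exp_add, Real.norm_of_nonneg (Real.exp_pos _).le, one_mul]
  apply le_of_eq; congr 1; push_cast; ring

theorem zfac_eventually : ∀ᶠ τ in iI, zfac τ = Complex.exp (Real.pi * Complex.I / 4) := by
  have h1 : ∀ᶠ τ in iI, tP τ ≠ 0 := ex_tP.tendsto.eventually_ne one_ne_zero
  filter_upwards [h1, iI_pos] with τ h hτ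
  have h2 := triJacobi.t2 τ hτ
  rw [th2_add_one, pow_one] at h2
  have h3 : th2 τ ≠ 0 := by
    rw [th2_tP]
    exact mul_ne_zero (mul_ne_zero two_ne_zero (nw_ne τ)) h
  exact (mul_right_cancel₀ h3 h2).symm

theorem Ex.pow_lin {f : ℂ → ℂ} {b : ℂ} (h : Ex f 1 b 0 0) (n : ℕ) :
    Ex (fun τ => f τ ^ n) 1 (n * b) (n * (n - 1) / 2 * b ^ 2) (n * (n - 1) * (n - 2) / 6 * b ^ 3) := by
  induction n with
  | zero => exact (Ex.one.congr fun τ _ => by simp).cast rfl (by simp) (by simp) (by simp)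
  | succ n ih =>
    refine ((ih.mul h).congr (g := fun τ => f τ ^ (n + 1)) fun τ _ => by ring).cast ?_ ?_ ?_ ?_ <;>
    · push_cast; ring

theorem Ex.pow_even {f : ℂ → ℂ} {c : ℂ} (h : Ex f 1 0 c 0) (n : ℕ) :
    Ex (fun τ => f τ ^ n) 1 0 (n * c) 0 := by
  induction n with
  | zero => exact (Ex.one.congr fun τ _ => by simp).cast rfl (by simp) (by simp) (by simp)
  | succ n ih =>
    refine ((ih.mul h).congr (g := fun τ => f τ ^ (n + 1)) fun τ _ => by ring).cast ?_ ?_ ?_ ?_ <;>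
    · push_cast; ring

/-- weight 4 form `θ₂⁴θ₄⁴/16` -/
def uU (τ : ℂ) : ℂ := 1 / 16 * (th2 τ ^ 4 * th4 τ ^ 4)
def vV (τ : ℂ) : ℂ := 1 / 16 * -(th3 τ ^ 4 * th4 τ ^ 4)
def uU' (τ : ℂ) : ℂ := 1 / 16 * -(th2 τ ^ 4 * th3 τ ^ 4)

theorem triU : Tri 8 uU uU' vV := triJacobi.delta.smul (1 / 16)

theorem uU_eq (τ : ℂ) : uU τ = nX τ * (tP τ ^ 4 * th4 τ ^ 4) := by
  unfold uU
  rw [th2_tP, ← nw_pow4]; ring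

theorem ex_uU : Ex uU 0 1 (-8) 28 := by
  refine ((Ex.nome.mul ((ex_tP.pow_even 4).mul (ex_th4.pow_lin 4))).congr
    fun τ _ => (uU_eq τ).symm).cast ?_ ?_ ?_ ?_ <;> norm_num

theorem ex_uU2 : Ex (fun τ => uU τ ^ 2) 0 0 1 (-16) := by
  refine ex_uU.sq.cast ?_ ?_ ?_ ?_ <;> norm_num

theorem ex_uU3 : Ex (fun τ => uU τ ^ 3) 0 0 0 1 := by
  refine ((ex_uU2.mul ex_uU).congr (g := fun τ => uU τ ^ 3) fun τ _ => by ring).cast ?_ ?_ ?_ ?_ <;> norm_num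

theorem ex_uU4 : Ex (fun τ => uU τ ^ 4) 0 0 0 0 := by
  refine ((ex_uU2.mul ex_uU2).congr (g := fun τ => uU τ ^ 4) fun τ _ => by ring).cast ?_ ?_ ?_ ?_ <;> norm_num

/-- Basis triples. -/
theorem triPhi (k j : ℕ) : Tri (1 * k + 8 * j) (fun τ => th3 τ ^ k * uU τ ^ j)
    (fun τ => th4 τ ^ k * uU' τ ^ j) (fun τ => th2 τ ^ k * vV τ ^ j) :=
  (triJacobi.pow k).mul (triU.pow j)

/-- product of theta_3 and theta_4 -/
def tQ (τ : ℂ) : ℂ := th3 τ * th4 τ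
theorem ex_tQ : Ex tQ 1 0 (-4) 0 := by
  refine (ex_th3.mul ex_th4).cast ?_ ?_ ?_ ?_ <;> norm_num

theorem vV_eq (τ : ℂ) : vV τ = -(1 / 16) * tQ τ ^ 4 := by unfold vV tQ; ring

theorem ex_nX4 : Ex (fun τ => nX τ ^ 4) 0 0 0 0 := Ex.of_bigO (Asymptotics.isBigO_refl _ _)
theorem ex_nX2 : Ex (fun τ => nX τ ^ 2) 0 0 1 0 := by
  refine Ex.nome.sq.cast ?_ ?_ ?_ ?_ <;> norm_num

/-- the combination at the cusp 1, divided by `w^5` -/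
def hH (A r : ℂ) (τ : ℂ) : ℂ :=
  r * (tP τ ^ 5 * tQ τ ^ 16) + (-2 * (A - 1184)) * (nX τ ^ 2 * (tP τ ^ 13 * tQ τ ^ 12))
    + nX τ ^ 4 * (1036 * 2 ^ 13 * (tP τ ^ 21 * tQ τ ^ 8) + 74 * 2 ^ 25 * (nX τ ^ 2 * (tP τ ^ 29 * tQ τ ^ 4))
      + 2 ^ 37 * (nX τ ^ 4 * tP τ ^ 37))

theorem hH_eq (A r : ℂ) (τ : ℂ) : nw τ ^ 5 * hH A r τ =
    th2 τ ^ 37 * vV τ ^ 0 + (-74) * (th2 τ ^ 29 * vV τ ^ 1) + 1036 * (th2 τ ^ 21 * vV τ ^ 2)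
      + (A - 1184) * (th2 τ ^ 13 * vV τ ^ 3) + 2048 * r * (th2 τ ^ 5 * vV τ ^ 4) := by
  unfold hH
  rw [th2_tP, vV_eq, ← nw_pow4]
  ring

theorem ex_hH_tail : Ex (fun τ => 1036 * 2 ^ 13 * (tP τ ^ 21 * tQ τ ^ 8) + 74 * 2 ^ 25 * (nX τ ^ 2 * (tP τ ^ 29 * tQ τ ^ 4))
      + 2 ^ 37 * (nX τ ^ 4 * tP τ ^ 37)) (1036 * 2 ^ 13) 0 (1036 * 2 ^ 13 * (21 - 32) + 74 * 2 ^ 25) 0 := by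
  refine (((((ex_tP.pow_even 21).mul (ex_tQ.pow_even 8)).smul (1036 * 2 ^ 13)).add
    ((ex_nX2.mul ((ex_tP.pow_even 29).mul (ex_tQ.pow_even 4))).smul (74 * 2 ^ 25))).add
    ((ex_nX4.mul (ex_tP.pow_even 37)).smul (2 ^ 37))).cast ?_ ?_ ?_ ?_ <;> norm_num

theorem ex_hH (A r : ℂ) : Ex (hH A r) r 0 (-59 * r - 2 * (A - 1184)) 0 := by
  refine (((((ex_tP.pow_even 5).mul (ex_tQ.pow_even 16)).smul r).add
    ((ex_nX2.mul ((ex_tP.pow_even 13).mul (ex_tQ.pow_even 12))).smul (-2 * (A - 1184)))).add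
    (ex_nX4.mul ex_hH_tail)).cast ?_ ?_ ?_ ?_ <;> · norm_num <;> try ring

theorem Tri.compare {f3 f4 f2 : ℂ → ℂ} (h : Tri 37 f3 f4 f2) {A r B : ℂ} (h3 : Ex f3 1 0 0 A)
    (h2 : Ex (fun τ => f2 τ / nw τ ^ 5) r 0 B 0) :
    ∀ τ : ℂ, 0 < τ.im → f2 τ = nw τ ^ 5 * hH A r τ := by
  have T0 : Tri 37 _ _ _ := triPhi 37 0
  have T1 : Tri 37 _ _ _ := triPhi 29 1
  have T2 : Tri 37 _ _ _ := triPhi 21 2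
  have T3 : Tri 37 _ _ _ := triPhi 13 3
  have T4 : Tri 37 _ _ _ := triPhi 5 4
  have T := h.add ((((T0.add (T1.smul (-74))).add (T2.smul 1036)).add (T3.smul (A - 1184))).add
    (T4.smul (2048 * r)) |>.smul (-1))
  have b3 := (h3.add ((((((ex_th3.pow_lin 37).mul Ex.one).add
    (((ex_th3.pow_lin 29).mul ex_uU).smul (-74))).add
    (((ex_th3.pow_lin 21).mul ex_uU2).smul 1036)).add
    (((ex_th3.pow_lin 13).mul ex_uU3).smul (A - 1184))).add
    (((ex_th3.pow_lin 5).mul ex_uU4).smul (2048 * r)) |>.smul (-1))).cast (a' := 0) (b' := 0)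
      (c' := 0) (d' := 0) (by norm_num) (by norm_num) (by norm_num) (by norm_num)
  have b2 := (h2.add ((ex_hH A r).smul (-1))).cast (a' := 0) (b' := 0) (d' := 0)
    (by norm_num) (by norm_num) rfl (by norm_num)
  have key := T.vanish (by
    refine (b3.congr_left fun τ => ?_).trans (Asymptotics.IsBigO.of_bound 1 ?_)
    · ring
    · filter_upwards with τ
      rw [norm_pow, norm_nX, ← Real.exp_nat_mul, Real.norm_of_nonneg (Real.exp_pos _).le, one_mul]
      apply le_of_eq; congr 1; push_cast; ring) (by
    have hb : (fun τ => f2 τ / nw τ ^ 5 + -1 * hH A r τ) =O[iI] fun τ => nX τ ^ 2 := by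
      have h4 : (fun τ => nX τ ^ 4) =O[iI] fun τ => nX τ ^ 2 := by
        refine ((nX_bdd.pow 2).mul (Asymptotics.isBigO_refl (fun τ => nX τ ^ 2) iI)).congr
          (fun τ => ?_) (fun τ => ?_) <;> ring
      refine ((b2.trans h4).add ((Asymptotics.isBigO_refl (fun τ => nX τ ^ 2) iI).const_mul_left
        (B + -1 * (-59 * r - 2 * (A - 1184))))).congr_left fun τ => ?_
      ring
    refine (((Asymptotics.isBigO_refl (fun τ => nw τ ^ 5) iI).mul hb).congr_left fun τ => ?_).trans
      (Asymptotics.IsBigO.of_bound 1 ?_)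
    · have := nw_ne τ
      rw [← hH_eq, mul_add, mul_div_cancel₀ _ (pow_ne_zero 5 this)]; ring
    · filter_upwards with τ
      rw [norm_mul, norm_pow, norm_pow, norm_nX, norm_nw, ← Real.exp_nat_mul, ← Real.exp_nat_mul,
        ← Real.exp_add, Real.norm_of_nonneg (Real.exp_pos _).le, one_mul]
      apply le_of_eq; congr 1; push_cast; ring)
  intro τ hτ
  have := key τ hτ
  rw [hH_eq]
  linear_combination this

theorem Tri.compare_coeff {f3 f4 f2 : ℂ → ℂ} (h : Tri 37 f3 f4 f2) {A r B : ℂ} (h3 : Ex f3 1 0 0 A)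
    (h2 : Ex (fun τ => f2 τ / nw τ ^ 5) r 0 B 0) : B = -59 * r - 2 * (A - 1184) := by
  refine h2.coeff2 ((ex_hH A r).congr fun τ hτ => ?_)
  rw [h.compare h3 h2 τ hτ, mul_div_cancel_left₀ _ (pow_ne_zero 5 (nw_ne τ))]

theorem Tri.compare_lim {f3 f4 f2 : ℂ → ℂ} (h : Tri 37 f3 f4 f2) {B : ℂ} (h3 : Ex f3 1 0 0 1184)
    (h2 : Ex (fun τ => f2 τ / nw τ ^ 5) 0 0 B 0) :
    Filter.Tendsto (fun τ => f2 τ / nw τ ^ 21) iI (nhds (1036 * 2 ^ 13)) := by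
  refine ex_hH_tail.tendsto.congr' ?_
  filter_upwards [iI_pos] with τ hτ
  rw [h.compare h3 h2 τ hτ, eq_div_iff (pow_ne_zero _ (nw_ne τ))]
  unfold hH
  rw [← nw_pow4]
  ring

section thetaLat
variable {n : ℕ} (L : Submodule ℤ (EuclideanSpace ℝ (Fin n)))

/-- Theta series of a translate of a lattice. -/
def thL (v : EuclideanSpace ℝ (Fin n)) (τ : ℂ) : ℂ :=
  ∑' x : L, Complex.exp (Real.pi * Complex.I * τ * (‖(x : EuclideanSpace ℝ (Fin n)) + v‖ ^ 2 : ℝ))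

variable [DiscreteTopology L] [IsZLattice ℝ L]

theorem thL_diff (v : EuclideanSpace ℝ (Fin n)) : DifferentiableOn ℂ (thL L v) {z | 0 < z.im} := by
  intro τ hτ
  have hτ : 0 < τ.im := hτ
  refine DifferentiableAt.differentiableWithinAt ?_
  have hU : IsOpen {z : ℂ | τ.im / 2 < z.im} := isOpen_lt continuous_const Complex.continuous_im
  refine DifferentiableOn.differentiableAt (s := {z : ℂ | τ.im / 2 < z.im}) ?_
    (hU.mem_nhds (by simp only [Set.mem_ofPred_eq]; linarith))
  unfold thL
  refine Complex.differentiableOn_tsum_of_summable_norm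
    (summable_gauss_add L (a := Real.pi * (τ.im / 2)) (by positivity) v) (fun i => by fun_prop) hU ?_
  intro x w hw
  rw [norm_gauss, Real.exp_le_exp]
  have h1 : τ.im / 2 < w.im := hw
  have h2 : Real.pi * (τ.im / 2) ≤ Real.pi * w.im := by
    have := Real.pi_pos; gcongr
  nlinarith [sq_nonneg ‖(x : EuclideanSpace ℝ (Fin n)) + v‖]

theorem thL_pos (v : EuclideanSpace ℝ (Fin n)) {y : ℝ} (hy : 0 < y) : thL L v (y * Complex.I) ≠ 0 := by
  have h1 : thL L v (y * Complex.I) =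
      ((∑' x : L, Real.exp (-(Real.pi * y) * ‖(x : EuclideanSpace ℝ (Fin n)) + v‖ ^ 2) : ℝ) : ℂ) := by
    unfold thL
    rw [Complex.ofReal_tsum]
    refine tsum_congr fun x => ?_
    rw [Complex.ofReal_exp]
    congr 1
    push_cast
    linear_combination (Real.pi * y * (‖(x : EuclideanSpace ℝ (Fin n)) + v‖ : ℂ) ^ 2) * Complex.I_sq
  rw [h1]
  have hs := summable_gauss_add L (a := Real.pi * y) (by positivity) v
  have := hs.tsum_pos (fun x => (Real.exp_pos _).le) 0 (Real.exp_pos _)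
  exact_mod_cast this.ne'

theorem sfac_cpow {τ : ℂ} (hτ : 0 < τ.im) (n : ℕ) : (1 / (-Complex.I * τ)) ^ (n / 2 : ℂ) = (sfac τ ^ n)⁻¹ := by
  rw [show (n / 2 : ℂ) = n * (1 / 2 : ℂ) by ring, Complex.cpow_nat_mul, ← inv_pow]
  congr 1
  unfold sfac
  rw [one_div, Complex.inv_cpow]
  intro h
  have h1 := Complex.arg_eq_pi_iff.1 h
  simp at h1
  linarith [h1.1]

theorem triLat (hd : ∀ x, x ∈ L ↔ ∀ y ∈ L, ∃ m : ℤ, ⟪x, y⟫ = (m : ℝ))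
    (s : EuclideanSpace ℝ (Fin n)) (hs : ∀ x ∈ L, ∃ m : ℤ, ⟪x, s⟫ = ‖x‖ ^ 2 / 2 + (m : ℝ)) :
    Tri n (thL L 0) (fun τ => thL L 0 (τ + 1)) (thL L s) := by
  have hInt0 : ∀ x ∈ L, ∃ m : ℤ, ‖x‖ ^ 2 = (m : ℝ) := fun x hx => by
    obtain ⟨m, hm⟩ := (hd x).1 hx x hx
    exact ⟨m, by rw [← hm, real_inner_self_eq_norm_sq]⟩
  obtain ⟨c, hc, hp⟩ := theta_poisson L hd
  have p3 : ∀ τ : ℂ, 0 < τ.im → thL L 0 τ = c * (sfac τ ^ n)⁻¹ * thL L 0 (-1 / τ) := by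
    intro τ hτ
    have := hp τ hτ 0
    rw [sfac_cpow hτ] at this
    unfold thL
    rw [this]
    simp
  have hc1 : (c : ℂ) = 1 := by
    have := p3 Complex.I (by simp)
    have h1 : sfac Complex.I = 1 := by unfold sfac; simp
    have h2 : (-1 / Complex.I) = Complex.I := by
      rw [div_eq_iff Complex.I_ne_zero, Complex.I_mul_I]
    have h3 := thL_pos L 0 (y := 1) one_pos
    simp only [Complex.ofReal_one, one_mul] at h3
    rw [h1, h2, one_pow, inv_one, mul_one] at this
    have h4 : (c : ℂ) * thL L 0 Complex.I = 1 * thL L 0 Complex.I := by rw [← this, one_mul]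
    exact mul_right_cancel₀ h3 h4
  refine ⟨thL_diff L 0, ?_, thL_diff L s, fun τ _ => rfl, ?_, ?_, ?_⟩
  · refine (thL_diff L 0).comp (by fun_prop) ?_
    intro τ hτ
    simpa using hτ
  · intro τ hτ
    unfold thL
    refine tsum_congr fun x => ?_
    obtain ⟨m, hm⟩ := hInt0 x x.2
    rw [add_zero, hm, Complex.exp_eq_exp_iff_exists_int]
    refine ⟨m, ?_⟩
    push_cast
    ring
  · intro τ hτ
    rw [p3 τ hτ, hc1]
    have := pow_ne_zero n (sfac_ne_zero hτ)
    field_simp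
  · intro τ hτ
    have := hp τ hτ s
    rw [sfac_cpow hτ, hc1] at this
    have h2 : thL L 0 (-1 / τ + 1) = ∑' x : L, Complex.exp (Real.pi * Complex.I * (-1 / τ) * (‖(x : EuclideanSpace ℝ (Fin n))‖ ^ 2 : ℝ)) *
          Complex.exp (2 * Real.pi * Complex.I * ⟪(x : EuclideanSpace ℝ (Fin n)), s⟫) := by
      unfold thL
      refine tsum_congr fun x => ?_
      obtain ⟨m, hm⟩ := hs x x.2
      rw [hm, add_zero, ← Complex.exp_add, Complex.exp_eq_exp_iff_exists_int]
      refine ⟨-m, ?_⟩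
      push_cast
      ring
    change thL L 0 (-1 / τ + 1) = _
    rw [h2]
    unfold thL
    rw [this]
    have := pow_ne_zero n (sfac_ne_zero hτ)
    rw [one_mul, ← mul_assoc, mul_inv_cancel₀ this, one_mul]

/-- A vector representing half the norm modulo integers. -/
theorem exists_shadow_vec (hd : ∀ x, x ∈ L ↔ ∀ y ∈ L, ∃ m : ℤ, ⟪x, y⟫ = (m : ℝ)) :
    ∃ s : EuclideanSpace ℝ (Fin n), ∀ x ∈ L, ∃ m : ℤ, ⟪x, s⟫ = ‖x‖ ^ 2 / 2 + (m : ℝ) := by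
  have : Module.Free ℤ L := ZLattice.module_free ℝ L
  have : Module.Finite ℤ L := ZLattice.module_finite ℝ L
  let b0 := Module.Free.chooseBasis ℤ L
  let b := b0.ofZLatticeBasis ℝ L
  have hbs : Submodule.span ℤ (Set.range b) = L := b0.ofZLatticeBasis_span ℝ
  let ℓ := b.constr ℝ (fun i => ‖b i‖ ^ 2 / 2)
  let s := (InnerProductSpace.toDual ℝ (EuclideanSpace ℝ (Fin n))).symm ℓ.toContinuousLinearMap
  have hsl : ∀ x, ⟪x, s⟫ = ℓ x := fun x => by
    rw [real_inner_comm]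
    simp [s]
  refine ⟨s, fun x hx => ?_⟩
  simp only [hsl]
  have hx' := hx
  rw [← hbs] at hx
  have key : x ∈ L ∧ ∃ m : ℤ, ℓ x = ‖x‖ ^ 2 / 2 + (m : ℝ) := by
    refine Submodule.span_induction (p := fun x _ => x ∈ L ∧ ∃ m : ℤ, ℓ x = ‖x‖ ^ 2 / 2 + (m : ℝ))
      ?_ ?_ ?_ ?_ hx
    · rintro _ ⟨i, rfl⟩
      refine ⟨hbs.le (Submodule.subset_span (Set.mem_range_self i)), 0, ?_⟩
      simp [ℓ]
    · exact ⟨L.zero_mem, 0, by simp⟩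
    · rintro x y _ _ ⟨hx, m, hm⟩ ⟨hy, k, hk⟩
      refine ⟨L.add_mem hx hy, ?_⟩
      obtain ⟨j, hj⟩ := (hd x).1 hx y hy
      refine ⟨m + k - j, ?_⟩
      rw [map_add, hm, hk, norm_add_sq_real, hj]
      push_cast; ring
    · rintro a x _ ⟨hx, m, hm⟩
      refine ⟨L.smul_mem a hx, ?_⟩
      obtain ⟨j, hj⟩ := (hd x).1 hx x hx
      rw [real_inner_self_eq_norm_sq] at hj
      obtain ⟨t, ht⟩ := Int.even_mul_succ_self (a - 1)
      have ht' : ((a : ℝ) - 1) * (a - 1 + 1) = t + t := by exact_mod_cast ht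
      refine ⟨a * m - t * j, ?_⟩
      rw [← Int.cast_smul_eq_zsmul ℝ a x, map_smul, hm, norm_smul, mul_pow, hj, Real.norm_eq_abs, sq_abs]
      push_cast
      rw [smul_eq_mul]
      linear_combination (-(j : ℝ) / 2) * ht'
  exact key.2

end thetaLat

theorem normOf_eq {n : ℕ} (x : EuclideanSpace ℝ (Fin n)) : normOf x = ‖x‖ ^ 2 :=
  real_inner_self_eq_norm_sq x

/-- The submodule underlying a unimodular lattice. -/
def latSub {n : ℕ} {L : Set (EuclideanSpace ℝ (Fin n))} (huni : IsUnimodularLattice L) :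
    Submodule ℤ (EuclideanSpace ℝ (Fin n)) where
  carrier := L
  zero_mem' := by
    rw [huni]
    exact fun y _ => ⟨0, by simp⟩
  add_mem' {a b} ha hb := by
    rw [huni] at ha hb ⊢
    intro y hy
    obtain ⟨m, hm⟩ := ha y hy
    obtain ⟨k, hk⟩ := hb y hy
    exact ⟨m + k, by rw [inner_add_left, hm, hk]; push_cast; ring⟩
  smul_mem' c x hx := by
    rw [huni] at hx ⊢
    intro y hy
    obtain ⟨m, hm⟩ := hx y hy
    refine ⟨c * m, ?_⟩
    rw [← Int.cast_smul_eq_zsmul ℝ c x, inner_smul_left, hm]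
    simp

theorem mem_latSub {n : ℕ} {L : Set (EuclideanSpace ℝ (Fin n))} (huni : IsUnimodularLattice L)
    (x : EuclideanSpace ℝ (Fin n)) : x ∈ latSub huni ↔ x ∈ L := Iff.rfl

theorem latSub_dual {n : ℕ} {L : Set (EuclideanSpace ℝ (Fin n))} (huni : IsUnimodularLattice L) :
    ∀ x, x ∈ latSub huni ↔ ∀ y ∈ latSub huni, ∃ m : ℤ, ⟪x, y⟫ = (m : ℝ) := by
  intro x
  have h : x ∈ L ↔ x ∈ dualSet L := by rw [← huni]
  exact h


theorem latSub_discrete {n : ℕ} {L : Set (EuclideanSpace ℝ (Fin n))} (huni : IsUnimodularLattice L)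
  (hmin : ∀ x ∈ L, x ≠ 0 → 3 ≤ normOf x) : DiscreteTopology (latSub huni) := by
  refine DiscreteTopology.of_forall_le_norm (r := 1) one_pos fun x hx => ?_
  have h := hmin x x.2 (by simpa using hx)
  rw [normOf_eq] at h
  change 1 ≤ ‖(x : EuclideanSpace ℝ (Fin n))‖
  nlinarith [norm_nonneg (x : EuclideanSpace ℝ (Fin n))]

theorem latSub_zlattice {n : ℕ} {L : Set (EuclideanSpace ℝ (Fin n))} (huni : IsUnimodularLattice L)
  (hmin : ∀ x ∈ L, x ≠ 0 → 3 ≤ normOf x) [DiscreteTopology (latSub huni)] : IsZLattice ℝ (latSub huni) := by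
  constructor
  by_contra hne
  have h1 : (Submodule.span ℝ (latSub huni : Set (EuclideanSpace ℝ (Fin n))))ᗮ ≠ ⊥ := by
    intro h
    exact hne (Submodule.orthogonal_eq_bot_iff.1 h)
  obtain ⟨v, hv, hv0⟩ := Submodule.exists_mem_ne_zero_of_ne_bot h1
  have h2 : (‖v‖⁻¹ : ℝ) • v ∈ L := by
    rw [← mem_latSub huni, latSub_dual huni]
    intro y hy
    refine ⟨0, ?_⟩
    have := (Submodule.mem_orthogonal' _ _).1 hv y (Submodule.subset_span hy)
    rw [inner_smul_left, this]; simp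
  have hvn : ‖v‖ ≠ 0 := norm_ne_zero_iff.2 hv0
  have h3 := hmin _ h2 (smul_ne_zero (inv_ne_zero hvn) hv0)
  rw [normOf_eq, norm_smul, norm_inv, norm_norm, inv_mul_cancel₀ hvn] at h3
  norm_num at h3


theorem shadow_eq {n : ℕ} {L : Set (EuclideanSpace ℝ (Fin n))} (huni : IsUnimodularLattice L)
    (hodd : IsOddLattice L) (s : EuclideanSpace ℝ (Fin n))
    (hs : ∀ x ∈ latSub huni, ∃ m : ℤ, ⟪x, s⟫ = ‖x‖ ^ 2 / 2 + (m : ℝ)) (v : EuclideanSpace ℝ (Fin n)) :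
    v ∈ shadow L ↔ v - s ∈ latSub huni := by
  have hd := latSub_dual huni
  have hInt0 : ∀ x ∈ latSub huni, ∃ m : ℤ, ‖x‖ ^ 2 = (m : ℝ) := fun x hx => by
    obtain ⟨m, hm⟩ := (hd x).1 hx x hx
    exact ⟨m, by rw [← hm, real_inner_self_eq_norm_sq]⟩
  have hE : ∀ x, x ∈ evenSublattice L ↔ x ∈ latSub huni ∧ ∃ m : ℤ, ‖x‖ ^ 2 = 2 * (m : ℝ) := by
    intro x
    rw [← normOf_eq]; rfl
  constructor
  · rintro ⟨hv, hvL⟩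
    have hv : ∀ y ∈ evenSublattice L, ∃ m : ℤ, ⟪v, y⟫ = (m : ℝ) := hv
    rw [← mem_latSub huni, hd] at hvL
    push Not at hvL
    obtain ⟨z, hz, hvz⟩ := hvL
    obtain ⟨a, ha⟩ := hInt0 z hz
    obtain ⟨p, hp⟩ := hv ((2 : ℤ) • z) (by
      rw [hE]
      refine ⟨(latSub huni).smul_mem 2 hz, 2 * a, ?_⟩
      rw [← Int.cast_smul_eq_zsmul ℝ 2 z, norm_smul, mul_pow, ha]
      norm_num; ring)
    rw [← Int.cast_smul_eq_zsmul ℝ 2 z, inner_smul_right] at hp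
    push_cast at hp
    have hpo : Odd p := by
      rw [← Int.not_even_iff_odd]
      rintro ⟨q, rfl⟩
      exact hvz q (by push_cast at hp; linarith)
    have hao : Odd a := by
      rw [← Int.not_even_iff_odd]
      rintro ⟨q, rfl⟩
      obtain ⟨k, hk⟩ := hv z (by
        rw [hE]; exact ⟨hz, q, by rw [ha]; push_cast; ring⟩)
      exact hvz k hk
    rw [hd]
    intro y hy
    obtain ⟨e, he⟩ := hInt0 y hy
    obtain ⟨m, hm⟩ := hs y hy
    rw [inner_sub_left, real_inner_comm, real_inner_comm y s, hm, he]
    rcases Int.even_or_odd e with ⟨q, hq⟩ | ho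
    · obtain ⟨k, hk⟩ := hv y (by rw [hE]; exact ⟨hy, q, by rw [he, hq]; push_cast; ring⟩)
      rw [real_inner_comm, hk]
      exact ⟨k - q - m, by rw [hq]; push_cast; ring⟩
    · obtain ⟨j, hj⟩ := (hd y).1 hy z hz
      obtain ⟨k, hk⟩ := hv (y - z) (by
        rw [hE]
        obtain ⟨q, hq⟩ := ho.add_odd hao
        refine ⟨(latSub huni).sub_mem hy hz, q - j, ?_⟩
        rw [norm_sub_sq_real, he, ha, hj]
        have : (e : ℝ) + a = q + q := by exact_mod_cast hq
        push_cast; linarith)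
      rw [inner_sub_right] at hk
      obtain ⟨q, hq⟩ := hpo.add_odd ho
      have hq' : (p : ℝ) + e = q + q := by exact_mod_cast hq
      refine ⟨k + q - e - m, ?_⟩
      rw [real_inner_comm]
      push_cast; linarith
  · intro hvs
    refine ⟨?_, ?_⟩
    · intro y hy
      rw [hE] at hy
      obtain ⟨hy, q, hq⟩ := hy
      obtain ⟨m, hm⟩ := hs y hy
      obtain ⟨k, hk⟩ := (hd _).1 hvs y hy
      rw [inner_sub_left, real_inner_comm y s, hm, hq] at hk
      exact ⟨k + q + m, by push_cast; linarith⟩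
    · intro hv
      obtain ⟨x, hx, a, hao, ha⟩ := hodd
      rw [normOf_eq] at ha
      obtain ⟨m, hm⟩ := hs x hx
      obtain ⟨k, hk⟩ := (hd _).1 hvs x hx
      obtain ⟨j, hj⟩ := (hd _).1 hv x hx
      rw [inner_sub_left, real_inner_comm x s, hm, ha, hj] at hk
      obtain ⟨q, hq⟩ := hao
      have : a = 2 * (j - k - m) := by
        have : (a : ℝ) = 2 * (j - k - m) := by linarith
        exact_mod_cast this
      omega

theorem finite_of_summable {ι : Type*} (N : ι → ℝ)
    (hs : Summable fun i => Real.exp (-Real.pi * N i)) (M : ℝ) : {i | N i < M}.Finite := by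
  have h := hs.tendsto_cofinite_zero.eventually (gt_mem_nhds (Real.exp_pos (-Real.pi * M)))
  refine Set.Finite.subset (Filter.eventually_cofinite.1 h) fun i hi => ?_
  have hi : N i < M := hi
  simp only [Set.mem_ofPred_eq, not_lt, Real.exp_le_exp]
  nlinarith [Real.pi_pos]

theorem theta_two {ι : Type*} (N : ι → ℝ) (hN : ∀ i, 0 ≤ N i)
    (hs : Summable fun i => Real.exp (-Real.pi * N i)) (M α β : ℝ) (hαβ : α ≠ β) (hα : α < M) (hβ : β < M)
    (hM : ∀ i, N i < M → N i = α ∨ N i = β) :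
    (fun τ : ℂ => ∑' i, Complex.exp (Real.pi * Complex.I * τ * (N i : ℝ)) -
      (({i | N i = α}.ncard : ℂ) * Complex.exp (Real.pi * Complex.I * τ * α)
        + ({i | N i = β}.ncard : ℂ) * Complex.exp (Real.pi * Complex.I * τ * β))) =O[iI]
      fun τ => Real.exp (-Real.pi * M * τ.im) := by
  classical
  have hf := finite_of_summable N hs M
  have fα : {i | N i = α}.Finite := hf.subset fun i (hi : N i = α) => by
    simp only [Set.mem_ofPred_eq]; rw [hi]; exact hα
  have fβ : {i | N i = β}.Finite := hf.subset fun i (hi : N i = β) => by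
    simp only [Set.mem_ofPred_eq]; rw [hi]; exact hβ
  have hdj : Disjoint fα.toFinset fβ.toFinset := by
    rw [Finset.disjoint_left]
    intro i hi hj
    simp at hi hj
    exact hαβ (hi.symm.trans hj)
  refine (theta_tail N hN hs (fα.toFinset ∪ fβ.toFinset) M ?_).congr_left fun τ => ?_
  · intro i hi
    by_contra hlt
    rcases hM i (not_le.1 hlt) with h | h <;> simp [h] at hi
  · rw [Finset.sum_union hdj]
    rw [Finset.sum_congr rfl (g := fun _ => Complex.exp (Real.pi * Complex.I * τ * α)) (by
      intro i hi
      simp at hi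
      rw [hi])]
    rw [Finset.sum_congr rfl (s₁ := fβ.toFinset) (g := fun _ => Complex.exp (Real.pi * Complex.I * τ * β)) (by
      intro i hi
      simp at hi
      rw [hi])]
    rw [Finset.sum_const, Finset.sum_const, Set.ncard_eq_toFinset_card _ fα, Set.ncard_eq_toFinset_card _ fβ]
    simp

theorem shadow_mod {n : ℕ} (M : Submodule ℤ (EuclideanSpace ℝ (Fin n))) [DiscreteTopology M] [IsZLattice ℝ M]
    (hd : ∀ x, x ∈ M ↔ ∀ y ∈ M, ∃ m : ℤ, ⟪x, y⟫ = (m : ℝ))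
    (s : EuclideanSpace ℝ (Fin n)) (hs : ∀ x ∈ M, ∃ m : ℤ, ⟪x, s⟫ = ‖x‖ ^ 2 / 2 + (m : ℝ)) :
    ∀ x ∈ M, ∃ k : ℤ, ‖x + s‖ ^ 2 = n / 4 + 2 * (k : ℝ) := by
  have hT := triLat M hd s hs
  have hc : ∀ x ∈ M, ∃ k : ℤ, ‖x + s‖ ^ 2 = ‖s‖ ^ 2 + 2 * (k : ℝ) := by
    intro x hx
    obtain ⟨m, hm⟩ := hs x hx
    obtain ⟨j, hj⟩ := (hd x).1 hx x hx
    rw [real_inner_self_eq_norm_sq] at hj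
    refine ⟨j + m, ?_⟩
    rw [norm_add_sq_real, hm, hj]; push_cast; ring
  have ht : ∀ τ, thL M s (τ + 1) = Complex.exp (Real.pi * Complex.I * (‖s‖ ^ 2 : ℝ)) * thL M s τ := by
    intro τ
    unfold thL
    rw [← tsum_mul_left]
    refine tsum_congr fun x => ?_
    obtain ⟨k, hk⟩ := hc x x.2
    rw [hk, ← Complex.exp_add, Complex.exp_eq_exp_iff_exists_int]
    refine ⟨k, ?_⟩
    push_cast; ring
  have hy : Filter.Tendsto (fun y : ℝ => (y : ℂ) * Complex.I) Filter.atTop iI := by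
    unfold iI
    rw [Filter.tendsto_comap_iff]
    refine Filter.tendsto_id.congr fun y => by simp
  obtain ⟨y, hz, hy0⟩ := ((hy.eventually zfac_eventually).and (Filter.eventually_gt_atTop 0)).exists
  have h2 := hT.t2 (y * Complex.I) (by simpa using hy0)
  rw [ht, hz] at h2
  have h3 := mul_right_cancel₀ (thL_pos M s hy0) h2
  rw [← Complex.exp_nat_mul, Complex.exp_eq_exp_iff_exists_int] at h3
  obtain ⟨j, hj⟩ := h3
  have h4 : ((‖s‖ ^ 2 : ℝ) : ℂ) = ((n / 4 + 2 * j : ℝ) : ℂ) := by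
    have hne : (Real.pi : ℂ) * Complex.I ≠ 0 := by simp [Real.pi_ne_zero]
    apply mul_left_cancel₀ hne
    rw [hj]; push_cast; ring
  have h5 : ‖s‖ ^ 2 = n / 4 + 2 * (j : ℝ) := by exact_mod_cast h4
  intro x hx
  obtain ⟨k, hk⟩ := hc x hx
  exact ⟨k + j, by rw [hk, h5]; push_cast; ring⟩

theorem exp_eq_nw (τ : ℂ) (k : ℕ) (a : ℝ) (ha : a = k / 4) :
    Complex.exp (Real.pi * Complex.I * τ * a) = nw τ ^ k := by
  unfold nw
  rw [← Complex.exp_nat_mul, ha]; congr 1; push_cast; ring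

theorem norm_nw_pow (τ : ℂ) (k : ℕ) : ‖nw τ ^ k‖ = Real.exp (-Real.pi * (k / 4) * τ.im) := by
  rw [norm_pow, norm_nw, ← Real.exp_nat_mul]; congr 1; ring

theorem kissing_number_dim37 {L : Set (EuclideanSpace ℝ (Fin 37))}
    (huni : IsUnimodularLattice L) (hodd : IsOddLattice L)
    (hmin : ∀ x ∈ L, x ≠ 0 → 3 ≤ normOf x) :
    (HasMinNorm L 3 ∧ numVecsOfNorm L 3 = 1184) ↔ HasSigma L 21 := by
  have hd := latSub_dual huni
  have := latSub_discrete huni hmin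
  have := latSub_zlattice huni hmin
  set M := latSub huni with hMdef
  obtain ⟨s, hs⟩ := exists_shadow_vec M hd
  have hT := triLat M hd s hs
  have hsh := shadow_eq huni hodd s hs
  have hmod := shadow_mod M hd s hs
  -- lattice side
  have hmin' : ∀ x : M, x ≠ 0 → 3 ≤ ‖(x : EuclideanSpace ℝ (Fin 37)) + 0‖ ^ 2 := by
    intro x hx
    have := hmin x x.2 (by simpa using hx)
    rwa [normOf_eq, ← add_zero (x : EuclideanSpace ℝ (Fin 37))] at this
  have sum0 := summable_gauss_add M Real.pi_pos 0
  have sums := summable_gauss_add M Real.pi_pos s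
  set A := {x : M | ‖(x : EuclideanSpace ℝ (Fin 37)) + 0‖ ^ 2 = 3}.ncard with hA
  set r := {x : M | ‖(x : EuclideanSpace ℝ (Fin 37)) + s‖ ^ 2 = 5 / 4}.ncard with hr
  set B := {x : M | ‖(x : EuclideanSpace ℝ (Fin 37)) + s‖ ^ 2 = 13 / 4}.ncard with hB
  have hAnum : numVecsOfNorm L 3 = A := by
    unfold numVecsOfNorm
    rw [hA, ← Set.ncard_image_of_injective _ (Subtype.val_injective (p := fun x => x ∈ M))]
    congr 1
    ext x
    simp only [Set.mem_ofPred_eq, Set.mem_image, add_zero, normOf_eq]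
    constructor
    · rintro ⟨h1, h2⟩
      exact ⟨⟨x, h1⟩, h2, rfl⟩
    · rintro ⟨y, h1, rfl⟩
      exact ⟨y.2, h1⟩
  have e3 : Ex (thL M 0) 1 0 0 A := by
    have h := theta_two (fun x : M => ‖(x : EuclideanSpace ℝ (Fin 37)) + 0‖ ^ 2)
      (fun x => by positivity) sum0 4 0 3 (by norm_num) (by norm_num) (by norm_num) (by
        intro x hx
        by_cases h0 : x = 0
        · left; simp [h0]
        · right
          have h3 := hmin' x h0
          obtain ⟨m, hm⟩ := (hd x).1 x.2 x x.2
          rw [real_inner_self_eq_norm_sq, ← add_zero (x : EuclideanSpace ℝ (Fin 37))] at hm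
          rw [hm] at hx h3 ⊢
          have a1 : m < 4 := by exact_mod_cast hx
          have a2 : 3 ≤ m := by exact_mod_cast h3
          have : m = 3 := by omega
          rw [this]; norm_num)
    have h1 : {x : M | ‖(x : EuclideanSpace ℝ (Fin 37)) + 0‖ ^ 2 = 0}.ncard = 1 := by
      rw [Set.ncard_eq_one]
      refine ⟨0, ?_⟩
      ext x
      simp
    rw [h1] at h
    refine (h.congr_left fun τ => ?_).trans (Asymptotics.IsBigO.of_bound 1 ?_)
    · change thL M 0 τ - _ = _
      congr 1
      rw [exp_eq_nw τ 0 0 (by norm_num), exp_eq_nw τ 12 3 (by norm_num), ← nw_pow4]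
      push_cast; ring
    · filter_upwards with τ
      rw [← nw_pow4, ← pow_mul, norm_nw_pow, Real.norm_of_nonneg (Real.exp_pos _).le, one_mul]
      apply le_of_eq; congr 1; push_cast; ring
  have hcases : ∀ x : M, ‖(x : EuclideanSpace ℝ (Fin 37)) + s‖ ^ 2 = 5 / 4 ∨
      ‖(x : EuclideanSpace ℝ (Fin 37)) + s‖ ^ 2 = 13 / 4 ∨
      ‖(x : EuclideanSpace ℝ (Fin 37)) + s‖ ^ 2 = 21 / 4 ∨
      29 / 4 ≤ ‖(x : EuclideanSpace ℝ (Fin 37)) + s‖ ^ 2 := by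
    intro x
    obtain ⟨k, hk⟩ := hmod x x.2
    have h0 : (0 : ℝ) ≤ ‖(x : EuclideanSpace ℝ (Fin 37)) + s‖ ^ 2 := by positivity
    rw [hk] at h0 ⊢
    push_cast at h0 ⊢
    have hk0 : -5 < k := by
      have : (-5 : ℝ) < k := by linarith
      exact_mod_cast this
    rcases (by omega : k = -4 ∨ k = -3 ∨ k = -2 ∨ -1 ≤ k) with h | h | h | h
    · left; rw [h]; norm_num
    · right; left; rw [h]; norm_num
    · right; right; left; rw [h]; norm_num
    · right; right; right
      have : (-1 : ℝ) ≤ k := by exact_mod_cast h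
      linarith
  have e2 : Ex (fun τ => thL M s τ / nw τ ^ 5) r 0 B 0 := by
    have h := theta_two (fun x : M => ‖(x : EuclideanSpace ℝ (Fin 37)) + s‖ ^ 2)
      (fun x => by positivity) sums (21 / 4) (5 / 4) (13 / 4) (by norm_num) (by norm_num) (by norm_num) (by
        intro x hx
        rcases hcases x with h | h | h | h
        · exact Or.inl h
        · exact Or.inr h
        · linarith
        · linarith)
    refine ((h.mul (Asymptotics.isBigO_refl (fun τ => (nw τ ^ 5)⁻¹) iI).norm_right).congr_left fun τ => ?_).trans
      (Asymptotics.IsBigO.of_bound 1 ?_)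
    · change (thL M s τ - _) * _ = _
      have := nw_ne τ
      rw [exp_eq_nw τ 5 (5 / 4) (by norm_num), exp_eq_nw τ 13 (13 / 4) (by norm_num), ← nw_pow4]
      rw [← hr, ← hB]
      field_simp
      ring
    · filter_upwards with τ
      rw [← nw_pow4, ← pow_mul, norm_nw_pow, norm_mul, norm_norm, norm_inv, norm_nw_pow,
        Real.norm_of_nonneg (Real.exp_pos _).le, one_mul, ← Real.exp_neg, ← Real.exp_add]
      apply le_of_eq; congr 1; push_cast; ring
  have hrel : (B : ℤ) = -59 * r - 2 * (A - 1184) := by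
    have := hT.compare_coeff e3 e2
    exact_mod_cast this
  constructor
  · rintro ⟨-, hk⟩
    rw [hAnum] at hk
    have hr0 : r = 0 := by omega
    have hB0 : B = 0 := by omega
    have hnr : ∀ x : M, ‖(x : EuclideanSpace ℝ (Fin 37)) + s‖ ^ 2 ≠ 5 / 4 := by
      intro x hx
      have hf : {x : M | ‖(x : EuclideanSpace ℝ (Fin 37)) + s‖ ^ 2 = 5 / 4}.Finite :=
        (finite_of_summable _ sums 2).subset fun y hy => by
          simp only [Set.mem_ofPred_eq] at hy ⊢; rw [hy]; norm_num
      rw [hr, Set.ncard_eq_zero hf] at hr0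
      exact (Set.ext_iff.1 hr0 x).1 hx
    have hnB : ∀ x : M, ‖(x : EuclideanSpace ℝ (Fin 37)) + s‖ ^ 2 ≠ 13 / 4 := by
      intro x hx
      have hf : {x : M | ‖(x : EuclideanSpace ℝ (Fin 37)) + s‖ ^ 2 = 13 / 4}.Finite :=
        (finite_of_summable _ sums 4).subset fun y hy => by
          simp only [Set.mem_ofPred_eq] at hy ⊢; rw [hy]; norm_num
      rw [hB, Set.ncard_eq_zero hf] at hB0
      exact (Set.ext_iff.1 hB0 x).1 hx
    refine ⟨21 / 4, ⟨?_, ?_⟩, by norm_num⟩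
    · by_contra hno
      have hall : ∀ x : M, 29 / 4 ≤ ‖(x : EuclideanSpace ℝ (Fin 37)) + s‖ ^ 2 := by
        intro x
        rcases hcases x with h | h | h | h
        · exact absurd h (hnr x)
        · exact absurd h (hnB x)
        · refine absurd ⟨x + s, (hsh _).2 ?_, ?_⟩ hno
          · rw [add_sub_cancel_right]; exact x.2
          · rw [normOf_eq]; exact h
        · exact h
      rw [hk] at e3
      rw [hr0] at e2
      have hlim := hT.compare_lim (by exact_mod_cast e3) (by simpa using e2)
      have ht := theta_tail (fun x : M => ‖(x : EuclideanSpace ℝ (Fin 37)) + s‖ ^ 2)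
        (fun x => by positivity) sums ∅ (29 / 4) (fun x _ => hall x)
      have h0 : (fun τ => thL M s τ / nw τ ^ 21) =O[iI] fun τ => nX τ ^ 2 := by
        refine ((ht.mul (Asymptotics.isBigO_refl (fun τ => (nw τ ^ 21)⁻¹) iI).norm_right).congr_left
          fun τ => ?_).trans (Asymptotics.IsBigO.of_bound 1 ?_)
        · change (thL M s τ - _) * _ = _
          simp [div_eq_mul_inv]
        · filter_upwards with τ
          rw [← nw_pow4, ← pow_mul, norm_nw_pow, norm_mul, norm_norm, norm_inv, norm_nw_pow,
            Real.norm_of_nonneg (Real.exp_pos _).le, one_mul, ← Real.exp_neg, ← Real.exp_add]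
          apply le_of_eq; congr 1; push_cast; ring
      have hlim0 := h0.trans_tendsto (by simpa using nX_tendsto.pow 2)
      have := tendsto_nhds_unique hlim hlim0
      norm_num at this
    · rintro t ⟨v, hv, rfl⟩
      rw [hsh] at hv
      rw [normOf_eq]
      have := hcases ⟨v - s, hv⟩
      have h1 := hnr ⟨v - s, hv⟩
      have h2 := hnB ⟨v - s, hv⟩
      simp only [sub_add_cancel] at this h1 h2
      rcases this with h | h | h | h
      · exact absurd h h1
      · exact absurd h h2
      · exact h.ge
      · linarith
  · rintro ⟨t, ⟨-, ht⟩, h21⟩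
    have ht' : t = 21 / 4 := by linarith
    subst ht'
    have hge : ∀ x : M, 21 / 4 ≤ ‖(x : EuclideanSpace ℝ (Fin 37)) + s‖ ^ 2 := by
      intro x
      refine ht ⟨x + s, (hsh _).2 ?_, normOf_eq _⟩
      rw [add_sub_cancel_right]; exact x.2
    have hr0 : r = 0 := by
      rw [hr]
      convert Set.ncard_empty M
      ext x
      have := hge x
      simp only [Set.mem_ofPred_eq, Set.mem_empty_iff_false, iff_false]
      intro h; linarith
    have hB0 : B = 0 := by
      rw [hB]
      convert Set.ncard_empty M
      ext x
      have := hge x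
      simp only [Set.mem_ofPred_eq, Set.mem_empty_iff_false, iff_false]
      intro h; linarith
    have hA1 : A = 1184 := by omega
    refine ⟨⟨?_, ?_⟩, by rw [hAnum, hA1]⟩
    · have hne : {x : M | ‖(x : EuclideanSpace ℝ (Fin 37)) + 0‖ ^ 2 = 3}.Nonempty :=
        Set.nonempty_of_ncard_ne_zero (by rw [← hA, hA1]; norm_num)
      obtain ⟨x, hx⟩ := hne
      simp only [Set.mem_ofPred_eq, add_zero] at hx
      refine ⟨x, x.2, ?_, by rw [normOf_eq, hx]⟩
      intro h0
      rw [h0] at hx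
      norm_num at hx
    · rintro t ⟨x, hx, hx0, rfl⟩
      exact hmin x hx hx0
end
end

section
/- There exists an odd unimodular lattice L in dimension 37 having minimum norm 3 with σ(L) = 21. -/
open scoped RealInnerProductSpace

noncomputable section

/-! ### The integral model: `x = 2 y`, with `x` in a `ℤ₄`-code of length 37 -/

/-- Generators of the `ℤ₄`-code. -/
def gm : Fin 6 → Fin 37 → ℤ := ![
  ![1, 0, 0, 0, 0, 0, 1, 1, 0, 1, 0, 1, 0, 1, 1, 0, 0, 1, 0, 1, 0, 1, 1, 1, 0, 0, 0, 1, 0, 0, 1, 1, 0, 0, 1, 0, 0],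
  ![0, 1, 0, 0, 0, 0, 1, 0, 1, 1, 1, 1, 0, 0, 1, 1, 1, 1, 0, 0, 1, 1, 0, 0, 1, 1, 0, 0, 1, 0, 0, 1, 1, 1, 1, 0, 1],
  ![0, 2, 1, 0, 0, 0, 0, 1, 1, 1, 0, 0, 1, 1, 1, 1, 0, 0, 1, 1, 1, 1, 0, 1, 1, 0, 1, 1, 1, 0, 0, 0, 1, 0, 0, 1, 1],
  ![0, 0, 0, 1, 0, 0, 0, 0, 0, 0, 1, 1, 1, 1, 1, 0, 1, 1, 1, 1, 1, 1, 0, 0, 0, 1, 1, 1, 1, 0, 0, 0, 0, 1, 1, 1, 1],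
  ![2, 2, 0, 2, 1, 0, 0, 0, 0, 0, 0, 0, 0, 0, 0, 1, 1, 1, 1, 1, 1, 1, 0, 0, 0, 0, 0, 0, 0, 1, 1, 1, 1, 1, 1, 1, 1],
  ![2, 0, 0, 0, 0, 1, 0, 0, 0, 0, 0, 0, 0, 0, 0, 0, 0, 0, 0, 0, 0, 0, 1, 1, 1, 1, 1, 1, 1, 1, 1, 1, 1, 1, 1, 1, 1]]

/-- A characteristic vector of norm 21. -/
def chi : Fin 37 → ℤ := ![0, 1, 1, -1, 1, -1, 0, 0, 1, 0, 1, 0, 1, 0, 0, 1, 1, 0, 1, 0, 1, 0, 0, 0, -1, 1, 1, 0, 1, 1, 0, 0, 1, 1, 0, 1, 1]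

/-- Position of the information symbols. -/
def ps (k : Fin 6) : Fin 37 := Fin.castLE (by norm_num) k

/-- Parity check vectors. -/
def chk (j : Fin 37) : Fin 37 → ℤ :=
  Pi.single j 1 + ∑ k, gm k j • Pi.single (ps k) (1 : ℤ)

/-- Membership in the (scaled) lattice. -/
def PL (x : Fin 37 → ℤ) : Prop :=
  (∀ k, (4 : ℤ) ∣ gm k ⬝ᵥ x) ∧ ∃ (a : Fin 6 → ℤ) (t : Fin 37 → ℤ), x = (∑ k, a k • gm k) + (2 : ℤ) • t

theorem gm_gram : ∀ k l, (4 : ℤ) ∣ gm k ⬝ᵥ gm l := by decide +kernel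

theorem gm_chk' : ∀ k j, (2 : ℤ) ∣ gm k j + ∑ l, gm l j * gm k (ps l) := by decide +kernel

theorem gm_wt : ∀ m : Fin 6 → Fin 2, m ≠ 0 →
    12 ≤ ∑ j, (∑ k, (m k : ℕ) * gm k j) % 2 := by decide +kernel

theorem gm_wt' : ∀ m : Fin 6 → Fin 2,
    ∑ j, (∑ k, (m k : ℕ) * gm k j) % 2 ≤ 20 := by decide +kernel

theorem gm_col : ∀ i j, i ≠ j → ∃ k, (gm k i + gm k j) % 2 = 1 := by decide +kernel

theorem gm_col' : ∀ i, ∃ k, gm k i % 2 = 1 := by decide +kernel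

theorem chi_chi : chi ⬝ᵥ chi = 21 := by decide +kernel

theorem chi_gm : ∀ k, (8 : ℤ) ∣ 2 * (chi ⬝ᵥ gm k) - gm k ⬝ᵥ gm k := by decide +kernel

theorem chi_cong : ∀ j, (2 : ℤ) ∣ chi j - 1 - ∑ k, (chi (ps k) - 1) * gm k j := by decide +kernel

theorem dot_chk (x : Fin 37 → ℤ) (j : Fin 37) :
    x ⬝ᵥ chk j = x j + ∑ k, gm k j * x (ps k) := by
  simp only [chk, dotProduct_add, dotProduct_sum, dotProduct_smul, dotProduct_single_one, smul_eq_mul]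

theorem gm_chk (k j) : (2 : ℤ) ∣ gm k ⬝ᵥ chk j := by
  rw [dot_chk]; exact gm_chk' k j

theorem PL_gm (k) : PL (gm k) :=
  ⟨fun l => gm_gram l k, Pi.single k 1, 0, by simp [Pi.single_apply]⟩

theorem PL_two {t : Fin 37 → ℤ} (h : ∀ k, (2 : ℤ) ∣ gm k ⬝ᵥ t) : PL ((2 : ℤ) • t) :=
  ⟨fun k => by
    rw [dotProduct_smul, smul_eq_mul]
    obtain ⟨c, hc⟩ := h k
    exact ⟨c, by rw [hc]; ring⟩, 0, t, by simp⟩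

theorem PL_single (i) : PL (Pi.single i (4 : ℤ)) := by
  have : (Pi.single i (4 : ℤ) : Fin 37 → ℤ) = (2 : ℤ) • Pi.single i (2 : ℤ) := by
    rw [← Pi.single_smul]; norm_num
  rw [this]
  exact PL_two fun k => by simp

theorem PL_add {x y} (hx : PL x) (hy : PL y) : PL (x + y) := by
  obtain ⟨h1, a, t, rfl⟩ := hx
  obtain ⟨h2, b, u, rfl⟩ := hy
  refine ⟨fun k => ?_, a + b, t + u, ?_⟩
  · rw [dotProduct_add]; exact dvd_add (h1 k) (h2 k)
  · simp [add_smul, Finset.sum_add_distrib]; abel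

theorem PL_smul {x} (c : ℤ) (hx : PL x) : PL (c • x) := by
  obtain ⟨h1, a, t, rfl⟩ := hx
  refine ⟨fun k => ?_, c • a, c • t, ?_⟩
  · rw [dotProduct_smul]; exact Dvd.dvd.mul_left (h1 k) c
  · simp only [smul_add, Finset.smul_sum, smul_smul, Pi.smul_apply, smul_eq_mul, mul_comm c]

theorem PL_t {a : Fin 6 → ℤ} {t : Fin 37 → ℤ} (h : PL ((∑ k, a k • gm k) + (2 : ℤ) • t)) (k) :
    (2 : ℤ) ∣ gm k ⬝ᵥ t := by
  have h1 := h.1 k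
  rw [dotProduct_add, dotProduct_sum, dotProduct_smul, smul_eq_mul] at h1
  have h2 : (4 : ℤ) ∣ ∑ i, gm k ⬝ᵥ a i • gm i := Finset.dvd_sum fun i _ => by
    rw [dotProduct_smul]; exact Dvd.dvd.mul_left (gm_gram k i) _
  omega

theorem PL_dot {x y} (hx : PL x) (hy : PL y) : (4 : ℤ) ∣ x ⬝ᵥ y := by
  obtain ⟨a, t, rfl⟩ := hx.2
  obtain ⟨b, u, rfl⟩ := hy.2
  have ht := PL_t hx
  have h1 : (2 : ℤ) ∣ t ⬝ᵥ ((∑ k, b k • gm k) + (2 : ℤ) • u) := by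
    rw [dotProduct_add, dotProduct_sum, dotProduct_smul, smul_eq_mul]
    refine dvd_add (Finset.dvd_sum fun i _ => ?_) ⟨_, rfl⟩
    rw [dotProduct_smul, dotProduct_comm]; exact Dvd.dvd.mul_left (ht i) _
  rw [add_dotProduct, sum_dotProduct, smul_dotProduct, smul_eq_mul]
  refine dvd_add (Finset.dvd_sum fun i _ => ?_) ?_
  · rw [smul_dotProduct]; exact Dvd.dvd.mul_left (hy.1 i) _
  · omega

theorem PL_of_dual {x} (h : ∀ y, PL y → (4 : ℤ) ∣ x ⬝ᵥ y) : PL x := by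
  refine ⟨fun k => by rw [dotProduct_comm]; exact h _ (PL_gm k), fun k => x (ps k), ?_⟩
  have h1 : ∀ j, ∃ t, x j = (∑ k, x (ps k) * gm k j) + 2 * t := fun j => by
    have h2 := h _ (PL_two fun k => gm_chk k j)
    rw [dotProduct_smul, smul_eq_mul, dot_chk] at h2
    simp_rw [mul_comm (gm _ j)] at h2
    exact ⟨(x j - ∑ k, x (ps k) * gm k j) / 2, by omega⟩
  choose t ht using h1
  exact ⟨t, by ext j; simp [ht j]⟩

theorem emod_two_le_sq (z : ℤ) : z % 2 ≤ z * z := by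
  rcases Int.emod_two_eq_zero_or_one z with h | h
  · rw [h]; exact mul_self_nonneg z
  · rw [h]
    have : z ≠ 0 := by rintro rfl; simp at h
    have := mul_self_pos.2 this
    omega

/-- Reduction mod 2 of a coefficient vector. -/
def red (a : Fin 6 → ℤ) (k : Fin 6) : Fin 2 := ⟨(a k % 2).toNat, by omega⟩

theorem red_sum (a : Fin 6 → ℤ) (j) :
    (2 : ℤ) ∣ (∑ k, a k * gm k j) - ∑ k, (red a k : ℕ) * gm k j := by
  rw [← Finset.sum_sub_distrib]
  refine Finset.dvd_sum fun k _ => ?_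
  rw [← sub_mul]
  refine Dvd.dvd.mul_right ?_ _
  simp only [red]
  omega

theorem dual_dist {u : Fin 37 → ℤ} (hu : u ≠ 0) (h : ∀ k, (2 : ℤ) ∣ gm k ⬝ᵥ u) : 3 ≤ u ⬝ᵥ u := by
  by_contra hlt
  have hsum : ∀ f : Fin 37 → ℤ, ∑ i, f i * u i = ∑ i with u i ≠ 0, f i * u i := fun f => by
    rw [Finset.sum_filter_of_ne]
    intro i _ hi h0
    exact hi (by rw [h0, mul_zero])
  simp only [dotProduct] at h hlt
  simp only [hsum] at h hlt
  have hsq : ∀ i, u i ≠ 0 → 1 ≤ u i * u i := fun i hi => by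
    have := mul_self_pos.2 hi
    omega
  have hodd : ∀ i, u i ≠ 0 → u i * u i ≤ 2 → u i = 1 ∨ u i = -1 := fun i hi h2 => by
    have h3 : u i ≤ 1 := by nlinarith
    have h4 : -1 ≤ u i := by nlinarith
    omega
  set O : Finset (Fin 37) := Finset.univ.filter fun i => u i ≠ 0 with hO
  have hmem : ∀ i ∈ O, u i ≠ 0 := fun i hi => (Finset.mem_filter.1 hi).2
  have hcard : (O.card : ℤ) ≤ ∑ i ∈ O, u i * u i := by
    have := Finset.card_nsmul_le_sum O (fun i => u i * u i) 1 (fun i hi => hsq i (hmem i hi))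
    simpa using this
  have hpos : 0 < O.card := by
    obtain ⟨i, hi⟩ := Function.ne_iff.1 hu
    exact Finset.card_pos.2 ⟨i, by simpa [hO] using hi⟩
  have h12 : O.card = 1 ∨ O.card = 2 := by omega
  rcases h12 with h1 | h2
  · obtain ⟨i, hi⟩ := Finset.card_eq_one.1 h1
    have hui := hmem i (by simp [hi])
    obtain ⟨k, hk⟩ := gm_col' i
    have := h k
    rw [hi, Finset.sum_singleton] at this hlt
    rcases hodd i hui (by omega) with e | e <;> rw [e] at this <;> omega
  · obtain ⟨i, j, hij, hi⟩ := Finset.card_eq_two.1 h2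
    have hui := hmem i (by simp [hi])
    have huj := hmem j (by simp [hi])
    obtain ⟨k, hk⟩ := gm_col i j hij
    have := h k
    rw [hi, Finset.sum_pair hij] at this hlt
    have q1 := hsq i hui
    have q2 := hsq j huj
    rcases hodd i hui (by omega) with e | e <;> rcases hodd j huj (by omega) with e' | e' <;>
      rw [e, e'] at this <;> omega

theorem PL_min {x} (hx : PL x) (h0 : x ≠ 0) : 12 ≤ x ⬝ᵥ x := by
  obtain ⟨a, t, rfl⟩ := hx.2
  by_cases hr : red a = 0
  · have ha : ∀ k, a k = 2 * (a k / 2) := fun k => by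
      have h1 := congrArg Fin.val (congrFun hr k)
      simp only [red, Pi.zero_apply, Fin.val_zero] at h1
      omega
    have he : (∑ k, a k • gm k) + (2 : ℤ) • t = (2 : ℤ) • ((∑ k, (a k / 2) • gm k) + t) := by
      rw [smul_add, Finset.smul_sum]
      congr 1
      refine Finset.sum_congr rfl fun k _ => ?_
      rw [smul_smul, ← ha k]
    rw [he] at hx h0 ⊢
    have h3 := dual_dist (u := (∑ k, (a k / 2) • gm k) + t) (fun h => h0 (by rw [h, smul_zero]))
      (fun k => by
        have := hx.1 k
        rw [dotProduct_smul, smul_eq_mul] at this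
        omega)
    rw [dotProduct_smul, smul_dotProduct, smul_eq_mul, smul_eq_mul]
    omega
  · refine (gm_wt _ hr).trans (Finset.sum_le_sum fun j _ => ?_)
    refine le_trans (le_of_eq ?_) (emod_two_le_sq _)
    have := red_sum a j
    simp only [Pi.add_apply, Finset.sum_apply, Pi.smul_apply, smul_eq_mul]
    omega

/-- `w` is characteristic. -/
def IsChar (w : Fin 37 → ℤ) : Prop := ∀ x, PL x → (8 : ℤ) ∣ 2 * (w ⬝ᵥ x) - x ⬝ᵥ x

theorem chi_isChar : IsChar chi := by
  have key : ∀ x y, (PL x ∧ (8 : ℤ) ∣ 2 * (chi ⬝ᵥ x) - x ⬝ᵥ x) →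
      (PL y ∧ (8 : ℤ) ∣ 2 * (chi ⬝ᵥ y) - y ⬝ᵥ y) →
      (PL (x + y) ∧ (8 : ℤ) ∣ 2 * (chi ⬝ᵥ (x + y)) - (x + y) ⬝ᵥ (x + y)) := by
    rintro x y ⟨h1, h2⟩ ⟨h3, h4⟩
    refine ⟨PL_add h1 h3, ?_⟩
    have h5 := PL_dot h1 h3
    have h6 : y ⬝ᵥ x = x ⬝ᵥ y := dotProduct_comm _ _
    simp only [dotProduct_add, add_dotProduct, h6]
    omega
  intro x hx
  obtain ⟨a, t, rfl⟩ := hx.2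
  have ht := PL_t hx
  refine (key _ _ ?_ ?_).2
  · refine Finset.sum_induction (fun k => a k • gm k)
      (fun x => PL x ∧ (8 : ℤ) ∣ 2 * (chi ⬝ᵥ x) - x ⬝ᵥ x) key ?_ ?_
    · refine ⟨?_, by simp⟩
      have := PL_smul 0 (PL_gm 0)
      simpa using this
    · intro k _
      refine ⟨PL_smul _ (PL_gm k), ?_⟩
      simp only [dotProduct_smul, smul_dotProduct, smul_eq_mul]
      obtain ⟨c, hc⟩ := chi_gm k
      obtain ⟨d, hd⟩ := gm_gram k k
      obtain ⟨e, he⟩ : (2 : ℤ) ∣ a k - a k * a k := by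
        rcases Int.even_or_odd' (a k) with ⟨b, hb | hb⟩ <;> rw [hb]
        · exact ⟨b - 2 * b * b, by ring⟩
        · exact ⟨-b - 2 * b * b, by ring⟩
      refine ⟨a k * c + e * d, ?_⟩
      have : 2 * (a k * chi ⬝ᵥ gm k) - a k * (a k * gm k ⬝ᵥ gm k) =
        a k * (2 * chi ⬝ᵥ gm k - gm k ⬝ᵥ gm k) + (a k - a k * a k) * gm k ⬝ᵥ gm k := by ring
      rw [this, hc, he, hd]; ring
  · refine ⟨PL_two ht, ?_⟩
    have h1 : (2 : ℤ) ∣ chi ⬝ᵥ t - t ⬝ᵥ t := by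
      have h2 : (2 : ℤ) ∣ (chi ⬝ᵥ t - t ⬝ᵥ t) - ∑ k, (chi (ps k) - 1) * gm k ⬝ᵥ t := by
        have : (chi ⬝ᵥ t - t ⬝ᵥ t) - ∑ k, (chi (ps k) - 1) * gm k ⬝ᵥ t =
            ∑ j, ((chi j - 1 - ∑ k, (chi (ps k) - 1) * gm k j) * t j + (t j - t j * t j)) := by
          simp only [dotProduct, sub_mul, Finset.sum_add_distrib, Finset.sum_sub_distrib,
            Finset.sum_mul, Finset.mul_sum, one_mul]
          rw [Finset.sum_comm (s := (Finset.univ : Finset (Fin 37)))]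
          rw [Finset.sum_comm (s := (Finset.univ : Finset (Fin 37)))]
          simp only [mul_assoc]
          ring
        rw [this]
        refine Finset.dvd_sum fun j _ => dvd_add (Dvd.dvd.mul_right (chi_cong j) _) ?_
        rcases Int.even_or_odd' (t j) with ⟨b, hb | hb⟩ <;> rw [hb]
        · exact ⟨b - 2 * b * b, by ring⟩
        · exact ⟨-b - 2 * b * b, by ring⟩
      have h3 : (2 : ℤ) ∣ ∑ k, (chi (ps k) - 1) * gm k ⬝ᵥ t :=
        Finset.dvd_sum fun k _ => Dvd.dvd.mul_left (ht k) _
      omega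
    simp only [dotProduct_smul, smul_dotProduct, smul_eq_mul]
    omega

theorem IsChar.norm_ge {w} (hw : IsChar w) : 21 ≤ w ⬝ᵥ w := by
  -- at least 17 odd coordinates
  have h17 : 17 ≤ w ⬝ᵥ w := by
    have hj : ∀ j, (2 : ℤ) ∣ (w j - 1) - ∑ k, (w (ps k) - 1) * gm k j := fun j => by
      have h1 := hw _ (PL_two fun k => gm_chk k j)
      have hsq : (2 : ℤ) ∣ chk j ⬝ᵥ chk j - (fun _ => (1 : ℤ)) ⬝ᵥ chk j := by
        simp only [dotProduct]
        rw [← Finset.sum_sub_distrib]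
        refine Finset.dvd_sum fun i _ => ?_
        rcases Int.even_or_odd' (chk j i) with ⟨b, hb | hb⟩ <;> rw [hb]
        · exact ⟨2 * b * b - b, by ring⟩
        · exact ⟨b + 2 * b * b, by ring⟩
      simp only [dotProduct_smul, smul_dotProduct, smul_eq_mul] at h1
      rw [dot_chk (fun _ => (1 : ℤ))] at hsq
      rw [dot_chk w] at h1
      have e : ∑ k, (w (ps k) - 1) * gm k j = ∑ k, gm k j * w (ps k) - ∑ k, gm k j * 1 := by
        rw [← Finset.sum_sub_distrib]
        exact Finset.sum_congr rfl fun k _ => by ring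
      rw [e]
      omega
    have h20 := gm_wt' (red fun k => w (ps k) - 1)
    have : ∑ j : Fin 37, (1 - (∑ k, (red (fun k => w (ps k) - 1) k : ℕ) * gm k j) % 2) ≤ w ⬝ᵥ w := by
      refine Finset.sum_le_sum fun j _ => ?_
      refine le_trans (le_of_eq ?_) (emod_two_le_sq _)
      have h1 := red_sum (fun k => w (ps k) - 1) j
      have h2 := hj j
      beta_reduce at h1
      omega
    rw [Finset.sum_sub_distrib] at this
    simp only [Finset.sum_const, Finset.card_univ, Fintype.card_fin] at this
    norm_num at this
    omega
  have hd : PL (w - chi) := PL_of_dual fun y hy => by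
    have h1 := hw y hy
    have h2 := chi_isChar y hy
    rw [sub_dotProduct]
    omega
  have h1 := PL_dot hd hd
  have h2 := chi_isChar _ hd
  have h3 : w ⬝ᵥ w = chi ⬝ᵥ chi + 2 * chi ⬝ᵥ (w - chi) + (w - chi) ⬝ᵥ (w - chi) := by
    have : w ⬝ᵥ chi = chi ⬝ᵥ w := dotProduct_comm _ _
    simp only [dotProduct_sub, sub_dotProduct, this]; ring
  rw [chi_chi] at h3
  omega

theorem isChar_of_shadow {m} (h : ∀ x, PL x → (8 : ℤ) ∣ x ⬝ᵥ x → (4 : ℤ) ∣ m ⬝ᵥ x)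
    (hm : ¬ PL m) : IsChar m := by
  have h1 : ∃ x, PL x ∧ ¬ (4 : ℤ) ∣ m ⬝ᵥ x := by
    by_contra hc
    push Not at hc
    exact hm (PL_of_dual hc)
  obtain ⟨x1, hx1, hn⟩ := h1
  have h11 := PL_dot hx1 hx1
  have h8 : ¬ (8 : ℤ) ∣ x1 ⬝ᵥ x1 := fun h8 => hn (h x1 hx1 h8)
  have h2 := h _ (PL_smul 2 hx1)
    (by simp only [dotProduct_smul, smul_dotProduct, smul_eq_mul]; omega)
  rw [dotProduct_smul, smul_eq_mul] at h2
  intro x hx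
  have hxx := PL_dot hx hx
  by_cases h8x : (8 : ℤ) ∣ x ⬝ᵥ x
  · have := h x hx h8x
    omega
  · have hc := PL_dot hx hx1
    have h6 : x1 ⬝ᵥ x = x ⬝ᵥ x1 := dotProduct_comm _ _
    have := h _ (PL_add hx hx1) (by
      simp only [dotProduct_add, add_dotProduct, h6]
      omega)
    rw [dotProduct_add] at this
    omega

/-! ### The real lattice -/

/-- The vector `x / 2`. -/
def emb (x : Fin 37 → ℤ) : EuclideanSpace ℝ (Fin 37) := WithLp.toLp 2 fun i => (x i : ℝ) / 2

theorem inner_emb (x y) : ⟪emb x, emb y⟫ = ((x ⬝ᵥ y : ℤ) : ℝ) / 4 := by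
  simp only [emb, PiLp.inner_apply, dotProduct, RCLike.inner_apply, conj_trivial]
  push_cast
  rw [Finset.sum_div]
  exact Finset.sum_congr rfl fun i _ => by ring

theorem inner_emb_int (x y) (m : ℤ) : ⟪emb x, emb y⟫ = (m : ℝ) ↔ x ⬝ᵥ y = 4 * m := by
  rw [inner_emb, div_eq_iff (by norm_num), mul_comm]
  exact_mod_cast Iff.rfl

theorem inner_single (y : EuclideanSpace ℝ (Fin 37)) (i) :
    ⟪y, emb (Pi.single i 4)⟫ = 2 * y i := by
  simp only [emb, PiLp.inner_apply, RCLike.inner_apply, conj_trivial]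
  rw [Finset.sum_eq_single i]
  · simp only [Pi.single_eq_same]
    push_cast
    ring
  · intro j _ hj
    simp [hj]
  · simp

/-- The lattice. -/
def LL : Set (EuclideanSpace ℝ (Fin 37)) := {y | ∃ x, PL x ∧ y = emb x}

theorem exists_emb (y : EuclideanSpace ℝ (Fin 37))
    (h : ∀ i, ∃ m : ℤ, ⟪y, emb (Pi.single i 4)⟫ = (m : ℝ)) : ∃ x, y = emb x := by
  choose m hm using h
  refine ⟨m, ?_⟩
  ext i
  have := hm i
  rw [inner_single] at this
  simp only [emb]
  linarith

theorem emb_injective : Function.Injective emb := fun x y h => by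
  ext i
  have := congrArg (fun z : EuclideanSpace ℝ (Fin 37) => z i) h
  simp only [emb] at this
  have h2 : (x i : ℝ) = y i := by linarith
  exact_mod_cast h2

theorem LL_unimodular : IsUnimodularLattice LL := by
  refine Set.Subset.antisymm ?_ ?_
  · rintro _ ⟨x, hx, rfl⟩ _ ⟨y, hy, rfl⟩
    obtain ⟨c, hc⟩ := PL_dot hx hy
    exact ⟨c, (inner_emb_int _ _ _).2 hc⟩
  · intro y hy
    obtain ⟨x, rfl⟩ := exists_emb y fun i => hy _ ⟨_, PL_single i, rfl⟩
    refine ⟨x, PL_of_dual fun z hz => ?_, rfl⟩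
    obtain ⟨c, hc⟩ := hy _ ⟨z, hz, rfl⟩
    exact ⟨c, (inner_emb_int _ _ _).1 hc⟩

/-- Twice a vector of norm 3. -/
def x0 : Fin 37 → ℤ := (2 : ℤ) • (fun i => if i = 0 ∨ i = 1 ∨ i = 6 then 1 else 0)

theorem PL_x0 : PL x0 := PL_two (by decide +kernel)

theorem x0_norm : x0 ⬝ᵥ x0 = 4 * 3 := by decide +kernel

theorem norm_x0 : normOf (emb x0) = 3 := by
  have := (inner_emb_int x0 x0 3).2 x0_norm
  rw [normOf, this]; norm_num

theorem LL_min : HasMinNorm LL 3 := by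
  refine ⟨⟨emb x0, ⟨x0, PL_x0, rfl⟩, ?_, norm_x0⟩, ?_⟩
  · intro h
    have := norm_x0
    rw [h] at this
    simp [normOf] at this
  · rintro _ ⟨_, ⟨x, hx, rfl⟩, h0, rfl⟩
    have h1 : x ≠ 0 := by
      rintro rfl
      apply h0
      ext i
      simp [emb]
    have h2 : ((12 : ℤ) : ℝ) ≤ ((x ⬝ᵥ x : ℤ) : ℝ) := Int.cast_le.2 (PL_min hx h1)
    rw [normOf, inner_emb]
    push_cast at h2 ⊢
    linarith

theorem mem_even {x} (hx : PL x) (h : (8 : ℤ) ∣ x ⬝ᵥ x) : emb x ∈ evenSublattice LL := by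
  refine ⟨⟨x, hx, rfl⟩, ?_⟩
  obtain ⟨c, hc⟩ := h
  refine ⟨c, ?_⟩
  rw [normOf, inner_emb, hc]
  push_cast
  ring

theorem LL_shadow : HasShadowMinNorm LL (21 / 4) := by
  refine ⟨⟨emb chi, ⟨?_, ?_⟩, ?_⟩, ?_⟩
  · rintro _ ⟨⟨x, hx, rfl⟩, c, hc⟩
    have h1 := chi_isChar x hx
    have h2 : x ⬝ᵥ x = 4 * (2 * c) := by
      rw [← inner_emb_int]
      rw [normOf] at hc
      rw [hc]; push_cast; ring
    exact ⟨chi ⬝ᵥ x / 4, (inner_emb_int _ _ _).2 (by omega)⟩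
  · rintro ⟨x, hx, he⟩
    rw [← emb_injective he] at hx
    have := PL_dot hx hx
    rw [chi_chi] at this
    omega
  · rw [normOf, inner_emb, chi_chi]; norm_num
  · rintro _ ⟨s, ⟨hs, hn⟩, rfl⟩
    obtain ⟨m, rfl⟩ := exists_emb s fun i => hs _ (mem_even (PL_single i) (by simp))
    have hc : IsChar m := isChar_of_shadow (fun x hx h8 => by
      obtain ⟨c, hc⟩ := hs _ (mem_even hx h8)
      exact ⟨c, (inner_emb_int _ _ _).1 hc⟩) (fun h => hn ⟨m, h, rfl⟩)
    have h2 : ((21 : ℤ) : ℝ) ≤ ((m ⬝ᵥ m : ℤ) : ℝ) := Int.cast_le.2 hc.norm_ge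
    rw [normOf, inner_emb]
    push_cast at h2 ⊢
    linarith

theorem exists_unimodular_dim37_min3_sigma21 :
    ∃ L : Set (EuclideanSpace ℝ (Fin 37)),
      IsUnimodularLattice L ∧ IsOddLattice L ∧ HasMinNorm L 3 ∧ HasSigma L 21 := by
  refine ⟨LL, LL_unimodular, ⟨emb x0, ⟨x0, PL_x0, rfl⟩, 3, by decide, ?_⟩, LL_min,
    21 / 4, LL_shadow, by norm_num⟩
  rw [norm_x0]; norm_num
end
end
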